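/- Let m be a positive half-integer. For τ in the upper half-plane and z1, z2 ∈ ℂ such that neither 2z1 nor 2z2 lies in ℤ + ℤ·(2τ), the following identity holds: θ_{0,2m+1}(τ, (−1/2 + 2m(z1−z2))/(2m+1)) · Φ^{[m,1/2]}(2τ, 2z1, 2z2, 0) = −i η(2τ)³ { θ_{0,2m+1}(τ, (1/2+z1−z2)/(2m+1) + z1+z2) / ϑ_{11}(2τ, 2z1) + θ_{0,2m+1}(τ, (1/2+z1−z2)/(2m+1) − z1−z2) / ϑ_{11}(2τ, 2z2) } + Σ_{j=1}^∞ Σ_{r=1}^{j} Σ_{k odd, 1≤k≤2m−1} (−1)^j q^{(2m+1)j² − (4m(j−r)+k)²/(8m)} { e^{πi(4mr−k)(z1−z2)} + e^{−πi(4mr−k)(z1−z2)} } [θ_{k,2m} − θ_{−k,2m}](τ, z1+z2) − Σ_{j=1}^∞ Σ_{r=0}^{j−1} Σ_{k odd, 1≤k≤2m−1} (−1)^j q^{(2m+1)j² − (4m(j−r)−k)²/(8m)} { e^{πi(4mr+k)(z1−z2)} + e^{−πi(4mr+k)(z1−z2)} } [θ_{k,2m} − θ_{−k,2m}](τ, z1+z2).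 -/

import Mathlib

open Complex

noncomputable section

namespace Wakimoto

/-- `qpow τ x = e^{2πiτx}`, i.e. `q^x` where `q = e^{2πiτ}`. -/
def qpow (τ x : ℂ) : ℂ := Complex.exp (2 * Real.pi * Complex.I * τ * x)

/-- `e2 z = e^{2πiz}`. -/
def e2 (z : ℂ) : ℂ := Complex.exp (2 * Real.pi * Complex.I * z)

/-- The mock theta function `Φ^{[m,s]}_1`. -/
def Phi1 (m s : ℂ) (τ z1 z2 t : ℂ) : ℂ :=
  Complex.exp (-(2 * Real.pi * Complex.I) * m * t) *
    ∑' j : ℤ,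
      Complex.exp (2 * Real.pi * Complex.I * (m * (j : ℂ) * (z1 + z2) + s * z1)) *
          qpow τ (m * (j : ℂ) ^ 2 + s * (j : ℂ)) /
        (1 - e2 z1 * qpow τ (j : ℂ))

/-- The mock theta function `Φ^{[m,s]}_2`. -/
def Phi2 (m s : ℂ) (τ z1 z2 t : ℂ) : ℂ :=
  Complex.exp (-(2 * Real.pi * Complex.I) * m * t) *
    ∑' j : ℤ,
      Complex.exp (-(2 * Real.pi * Complex.I) * (m * (j : ℂ) * (z1 + z2) + s * z2)) *
          qpow τ (m * (j : ℂ) ^ 2 + s * (j : ℂ)) /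
        (1 - e2 (-z2) * qpow τ (j : ℂ))

/-- `Φ^{[m,s]} = Φ^{[m,s]}_1 - Φ^{[m,s]}_2`. -/
def Phi (m s : ℂ) (τ z1 z2 t : ℂ) : ℂ :=
  Phi1 m s τ z1 z2 t - Phi2 m s τ z1 z2 t

/-- Jacobi's theta function `θ_{k,m}`. -/
def jTheta (k m : ℂ) (τ z : ℂ) : ℂ :=
  ∑' j : ℤ,
    Complex.exp (2 * Real.pi * Complex.I * (m * ((j : ℂ) + k / (2 * m)) * z)) *
      qpow τ (m * ((j : ℂ) + k / (2 * m)) ^ 2)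

/-- The signed theta function `θ^{(-)}_{k,m}`. -/
def jThetaM (k m : ℂ) (τ z : ℂ) : ℂ :=
  ∑' j : ℤ,
    (-1 : ℂ) ^ j *
      Complex.exp (2 * Real.pi * Complex.I * (m * ((j : ℂ) + k / (2 * m)) * z)) *
      qpow τ (m * ((j : ℂ) + k / (2 * m)) ^ 2)

/-- The Dedekind eta function. -/
def eta (τ : ℂ) : ℂ := qpow τ (1 / 24) * ∏' n : ℕ, (1 - qpow τ ((n : ℂ) + 1))

/-- The Mumford theta functions `ϑ_{ab}`. -/
def mumford (a b : ℕ) (τ z : ℂ) : ℂ :=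
  ∑' n : ℤ,
    Complex.exp (Real.pi * Complex.I * τ * ((n : ℂ) + (a : ℂ) / 2) ^ 2 +
      2 * Real.pi * Complex.I * ((n : ℂ) + (a : ℂ) / 2) * (z + (b : ℂ) / 2))

/-- `z` lies in the lattice `ℤ + ℤτ`. -/
def InLattice (τ z : ℂ) : Prop := ∃ a b : ℤ, z = (a : ℂ) + (b : ℂ) * τ


theorem gs (ρ t : ℝ) (h0 : 0 < ρ) (h1 : ρ < 1) (ht : 0 < t) (k : ℕ) :
    Summable (fun n : ℤ => (|n| : ℝ) ^ k * (t ^ n * ρ ^ (n ^ 2))) := by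
  have hl : Real.log ρ < 0 := Real.log_neg h0 h1
  have hT : 0 < -Real.log ρ / Real.pi := div_pos (by linarith) Real.pi_pos
  refine Summable.of_nonneg_of_le (fun n => by positivity) (fun n => ?_)
    (summable_pow_mul_jacobiTheta₂_term_bound (|Real.log t| / (2 * Real.pi)) hT k)
  push_cast
  refine mul_le_mul_of_nonneg_left ?_ (by positivity)
  rw [← Real.rpow_intCast, ← Real.rpow_intCast, Real.rpow_def_of_pos ht, Real.rpow_def_of_pos h0,
    ← Real.exp_add]
  apply Real.exp_le_exp.2
  have : Real.log t * n ≤ |Real.log t| * |(n:ℝ)| := by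
    rw [← abs_mul]; exact le_abs_self _
  have e : -Real.pi * (-Real.log ρ / Real.pi * (n:ℝ) ^ 2 - 2 * (|Real.log t| / (2 * Real.pi)) * |(n:ℝ)|)
    = Real.log ρ * (n:ℝ)^2 + |Real.log t| * |(n:ℝ)| := by
    field_simp
    ring
  push_cast
  rw [e]
  linarith

theorem gsC (q x : ℂ) (h0 : q ≠ 0) (h1 : ‖q‖ < 1) (hx : x ≠ 0) :
    Summable (fun n : ℤ => ‖x ^ n * q ^ (n ^ 2)‖) := by
  have := gs ‖q‖ ‖x‖ (norm_pos_iff.2 h0) h1 (norm_pos_iff.2 hx) 0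
  simpa [norm_mul, norm_zpow] using this

noncomputable def ff (w : ℂ) : ℂ := w / (1 - w ^ 2)

theorem ff_small (w : ℂ) (h : ‖w‖ ≤ 1 / 2) : ‖ff w‖ ≤ 1 := by
  unfold ff
  rw [norm_div]
  have h2 : 1 - ‖w‖ ^ 2 ≤ ‖1 - w ^ 2‖ := by
    have := norm_sub_norm_le (1 : ℂ) (w ^ 2)
    simpa using this
  have h0 := norm_nonneg w
  rw [div_le_one (by nlinarith)]
  nlinarith

theorem ff_big (w : ℂ) (h : 2 ≤ ‖w‖) : ‖ff w‖ ≤ 1 := by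
  unfold ff
  rw [norm_div]
  have h2 : ‖w‖ ^ 2 - 1 ≤ ‖1 - w ^ 2‖ := by
    have := norm_sub_norm_le (w ^ 2) (1 : ℂ) 
    rw [norm_sub_rev]
    simpa using this
  have h0 := norm_nonneg w
  rw [div_le_one (by nlinarith)]
  nlinarith

theorem ff_bdd (q x : ℂ) (h0 : q ≠ 0) (h1 : ‖q‖ < 1) (hx : x ≠ 0) :
    ∃ K : ℝ, ∀ n : ℤ, ‖ff (x * q ^ n)‖ ≤ K := by
  have hX := norm_pos_iff.2 hx
  have hQ := norm_pos_iff.2 h0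
  obtain ⟨N, hN⟩ := exists_pow_lt_of_lt_one (y := ‖q‖) (x := min (1 / (2 * ‖x‖)) (‖x‖ / 2)) (by positivity) h1
  have hN1 := lt_of_lt_of_le hN (min_le_left _ _)
  have hN2 := lt_of_lt_of_le hN (min_le_right _ _)
  rw [lt_div_iff₀ (by positivity)] at hN1
  refine ⟨1 + ∑ n ∈ Finset.Icc (-(N : ℤ)) N, ‖ff (x * q ^ n)‖, fun n => ?_⟩
  have hs : 0 ≤ ∑ n ∈ Finset.Icc (-(N : ℤ)) N, ‖ff (x * q ^ n)‖ :=
    Finset.sum_nonneg (fun _ _ => norm_nonneg _)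
  by_cases hn : n ∈ Finset.Icc (-(N : ℤ)) N
  · have := Finset.single_le_sum (f := fun n : ℤ => ‖ff (x * q ^ n)‖) (fun _ _ => norm_nonneg _) hn
    linarith
  · rw [Finset.mem_Icc, not_and_or, not_le, not_le] at hn
    suffices ‖ff (x * q ^ n)‖ ≤ 1 by linarith
    rcases hn with hn | hn
    · apply ff_big
      rw [norm_mul, norm_zpow]
      have h3 : ‖q‖ ^ (-(N:ℤ)) ≤ ‖q‖ ^ n := zpow_le_zpow_right_of_le_one₀ hQ h1.le hn.le
      rw [zpow_neg, zpow_natCast] at h3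
      have h4 : 2 ≤ ‖x‖ * (‖q‖ ^ N)⁻¹ := by
        rw [← div_eq_mul_inv, le_div_iff₀ (by positivity)]; linarith
      nlinarith
    · apply ff_small
      rw [norm_mul, norm_zpow]
      have h3 : ‖q‖ ^ n ≤ ‖q‖ ^ (N:ℤ) := zpow_le_zpow_right_of_le_one₀ hQ h1.le hn.le
      rw [zpow_natCast] at h3
      nlinarith

noncomputable def PQ (Q : ℂ) (n : ℕ) : ℂ := ∏ i ∈ Finset.range n, (1 - Q ^ (i + 1))
noncomputable def gg (Q : ℂ) (k : ℤ) : ℂ := if 0 ≤ k then (PQ Q k.toNat)⁻¹ else 0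

theorem one_sub_ne (Q : ℂ) (h1 : ‖Q‖ < 1) (i : ℕ) : 1 - Q ^ (i + 1) ≠ 0 := by
  intro h
  have h2 : Q ^ (i + 1) = 1 := (sub_eq_zero.1 h).symm
  have h3 : ‖Q‖ ^ (i + 1) = 1 := by rw [← norm_pow, h2, norm_one]
  have := pow_lt_one₀ (norm_nonneg Q) h1 (Nat.succ_ne_zero i)
  simp only [Nat.succ_eq_add_one] at this
  linarith

theorem PQ_ne (Q : ℂ) (h1 : ‖Q‖ < 1) (n : ℕ) : PQ Q n ≠ 0 :=
  Finset.prod_ne_zero_iff.2 (fun i _ => one_sub_ne Q h1 i)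

theorem gg_rec (Q : ℂ) (h1 : ‖Q‖ < 1) (k : ℤ) : gg Q (k - 1) = (1 - Q ^ k) * gg Q k := by
  unfold gg
  rcases lt_trichotomy k 0 with h | h | h
  · rw [if_neg (by omega), if_neg (by omega)]; simp
  · subst h; simp
  · obtain ⟨n, rfl⟩ : ∃ n : ℕ, k = n + 1 := ⟨(k - 1).toNat, by omega⟩
    rw [if_pos (by omega), if_pos (by omega)]
    have e1 : ((n : ℤ) + 1 - 1).toNat = n := by omega
    have e2 : ((n : ℤ) + 1).toNat = n + 1 := by omega
    rw [e1, e2]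
    have : PQ Q (n + 1) = PQ Q n * (1 - Q ^ (n + 1)) := by
      unfold PQ; rw [Finset.prod_range_succ]
    rw [this]
    have a := PQ_ne Q h1 n
    have b := one_sub_ne Q h1 n
    have c : Q ^ ((n : ℤ) + 1) = Q ^ (n + 1) := by exact_mod_cast zpow_natCast Q (n + 1)
    rw [c]
    field_simp

noncomputable def bb (q : ℂ) (n : ℕ) (l : ℤ) : ℂ :=
  (-1) ^ l * q ^ (l ^ 2 + l) * (PQ (q ^ 2) (2 * n + 1) * gg (q ^ 2) (n - l) * gg (q ^ 2) (n + l + 1))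

theorem bb_rec (q : ℂ) (h0 : q ≠ 0) (h1 : ‖q ^ 2‖ < 1) (n : ℕ) (l : ℤ) :
    bb q (n + 1) l = (1 + q ^ (4 * n + 4)) * bb q n l
      - q ^ (2 * n + 2) * (bb q n (l - 1) + bb q n (l + 1)) := by
  unfold bb
  have e1 := gg_rec (q ^ 2) h1 (n + 1 - l)
  have e2 := gg_rec (q ^ 2) h1 (n + l + 2)
  have e3 := gg_rec (q ^ 2) h1 (n + l + 1)
  have e4 := gg_rec (q ^ 2) h1 (n - l)
  rw [show (n : ℤ) + 1 - l - 1 = n - l by ring] at e1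
  rw [show (n : ℤ) + l + 2 - 1 = n + l + 1 by ring] at e2
  rw [show (n : ℤ) + l + 1 - 1 = n + l by ring] at e3
  have p1 : PQ (q ^ 2) (2 * (n + 1) + 1) = PQ (q ^ 2) (2 * n + 1) * (1 - (q ^ 2) ^ (2 * n + 2)) *
      (1 - (q ^ 2) ^ (2 * n + 3)) := by
    unfold PQ
    rw [show 2 * (n + 1) + 1 = 2 * n + 1 + 1 + 1 by ring, Finset.prod_range_succ,
      Finset.prod_range_succ]
  rw [p1]
  push_cast
  rw [show (n : ℤ) + 1 + l + 1 = n + l + 2 by ring, show (n : ℤ) - (l - 1) = n + 1 - l by ring,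
    show (n : ℤ) + (l - 1) + 1 = n + l by ring, show (n : ℤ) - (l + 1) = n - l - 1 by ring,
    show (n : ℤ) + (l + 1) + 1 = n + l + 2 by ring, e4, e3, e1, e2]
  generalize gg (q ^ 2) (n + 1 - l) = G
  generalize gg (q ^ 2) (n + l + 2) = H
  generalize PQ (q ^ 2) (2 * n + 1) = P
  have s1 : (-1 : ℂ) ^ (l - 1) = - (-1) ^ l := by rw [zpow_sub₀ (by norm_num)]; simp [div_neg]
  have s2 : (-1 : ℂ) ^ (l + 1) = - (-1) ^ l := by rw [zpow_add₀ (by norm_num)]; simp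
  rw [s1, s2]
  have hB : q ^ l ≠ 0 := zpow_ne_zero _ h0
  have r1 : q ^ ((l - 1) ^ 2 + (l - 1)) = q ^ (l ^ 2 + l) * (q ^ l)⁻¹ ^ 2 := by
    rw [show (l - 1) ^ 2 + (l - 1) = l ^ 2 + l - l - l by ring, zpow_sub₀ h0, zpow_sub₀ h0]
    field_simp
  have r2 : q ^ ((l + 1) ^ 2 + (l + 1)) = q ^ (l ^ 2 + l) * (q ^ l) ^ 2 * q ^ 2 := by
    rw [show (l + 1) ^ 2 + (l + 1) = l ^ 2 + l + l + l + 2 by ring, zpow_add₀ h0, zpow_add₀ h0,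
      zpow_add₀ h0, zpow_ofNat]
    ring
  rw [r1, r2]
  have t1 : ∀ a : ℤ, (q ^ 2) ^ a = (q ^ a) ^ 2 := fun a => by
    rw [← zpow_natCast, ← zpow_natCast, ← zpow_mul, ← zpow_mul, mul_comm]
  rw [t1, t1, t1, t1]
  have u1 : q ^ ((n : ℤ) + 1 - l) = q ^ n * q * (q ^ l)⁻¹ := by
    rw [zpow_sub₀ h0, zpow_add₀ h0]; simp [div_eq_mul_inv]
  have u2 : q ^ ((n : ℤ) + l + 2) = q ^ n * q ^ l * q ^ 2 := by
    rw [zpow_add₀ h0, zpow_add₀ h0]; simp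
  have u3 : q ^ ((n : ℤ) + l + 1) = q ^ n * q ^ l * q := by
    rw [zpow_add₀ h0, zpow_add₀ h0]; simp
  have u4 : q ^ ((n : ℤ) - l) = q ^ n * (q ^ l)⁻¹ := by
    rw [zpow_sub₀ h0]; simp [div_eq_mul_inv]
  rw [u1, u2, u3, u4]
  have v1 : q ^ (4 * n + 4) = (q ^ n) ^ 4 * q ^ 4 := by ring
  have v2 : q ^ (2 * n + 2) = (q ^ n) ^ 2 * q ^ 2 := by ring
  have v3 : (q ^ 2) ^ (2 * n + 2) = (q ^ n) ^ 4 * q ^ 4 := by ring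
  have v4 : (q ^ 2) ^ (2 * n + 3) = (q ^ n) ^ 4 * q ^ 6 := by ring
  rw [v1, v2, v3, v4]
  generalize q ^ n = A at *
  generalize q ^ l = B at *
  field_simp
  ring

theorem bb_supp (q : ℂ) (n : ℕ) (l : ℤ) (h : l ∉ Finset.Icc (-(n + 1) : ℤ) n) : bb q n l = 0 := by
  rw [Finset.mem_Icc, not_and_or, not_le, not_le] at h
  unfold bb gg
  rcases h with h | h
  · rw [if_neg (c := 0 ≤ (n : ℤ) + l + 1) (by omega)]; simp
  · rw [if_neg (c := 0 ≤ (n : ℤ) - l) (by omega)]; simp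

theorem bb_summable (q : ℂ) (n : ℕ) (c : ℤ → ℂ) (d : ℤ) : Summable (fun l : ℤ => c l * bb q n (l + d)) := by
  apply summable_of_ne_finset_zero (s := Finset.Icc (-(n + 1) - d : ℤ) (n - d))
  intro l hl
  rw [bb_supp, mul_zero]
  simp only [Finset.mem_Icc] at hl ⊢
  omega

theorem W_eq (q : ℂ) (h0 : q ≠ 0) (h1 : ‖q ^ 2‖ < 1) (n : ℕ) :
    ∑' l : ℤ, (2 * l + 1 : ℂ) * bb q n l = 2 * PQ (q ^ 2) n ^ 2 := by
  induction n with
  | zero =>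
    have := one_sub_ne (q ^ 2) h1 0
    rw [tsum_eq_sum (s := {0, -1})]
    · rw [Finset.sum_pair (by norm_num)]
      simp [bb, gg, PQ] at this ⊢
      norm_num
      field_simp
      norm_num
    · intro l hl
      rw [bb_supp, mul_zero]
      simp at hl ⊢
      omega
  | succ n ih =>
    have e : ∀ l : ℤ, (2 * l + 1 : ℂ) * bb q (n + 1) l =
        (1 + q ^ (4 * n + 4)) * ((2 * l + 1 : ℂ) * bb q n (l + 0))
        - q ^ (2 * n + 2) * ((2 * l + 1 : ℂ) * bb q n (l + (-1)) + (2 * l + 1 : ℂ) * bb q n (l + 1)) := by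
      intro l
      rw [bb_rec q h0 h1, add_zero, ← sub_eq_add_neg]; ring
    have s0 := bb_summable q n (fun l => 2 * l + 1) 0
    have s1 := bb_summable q n (fun l => 2 * l + 1) (-1)
    have s2 := bb_summable q n (fun l => 2 * l + 1) 1
    rw [tsum_congr e, Summable.tsum_sub (s0.mul_left _) ((s1.add s2).mul_left _), tsum_mul_left, tsum_mul_left,
      Summable.tsum_add s1 s2]
    have f1 : ∑' l : ℤ, (2 * l + 1 : ℂ) * bb q n (l + (-1)) = ∑' l : ℤ, (2 * l + 3 : ℂ) * bb q n l := by
      rw [← (Equiv.addRight (-1 : ℤ)).tsum_eq (fun l : ℤ => (2 * l + 3 : ℂ) * bb q n l)]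
      apply tsum_congr; intro l
      simp only [Equiv.coe_addRight]; push_cast; ring
    have f2 : ∑' l : ℤ, (2 * l + 1 : ℂ) * bb q n (l + 1) = ∑' l : ℤ, (2 * l - 1 : ℂ) * bb q n l := by
      rw [← (Equiv.addRight (1 : ℤ)).tsum_eq (fun l : ℤ => (2 * l - 1 : ℂ) * bb q n l)]
      apply tsum_congr; intro l
      simp only [Equiv.coe_addRight]; push_cast; ring
    have s3 := bb_summable q n (fun l => 2 * l + 3) 0
    have s4 := bb_summable q n (fun l => 2 * l - 1) 0
    simp only [add_zero] at s3 s4 ⊢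
    rw [f1, f2, ← Summable.tsum_add s3 s4]
    have f3 : ∀ l : ℤ, (2 * l + 3 : ℂ) * bb q n l + (2 * l - 1 : ℂ) * bb q n l = 2 * ((2 * l + 1 : ℂ) * bb q n l) := by
      intro l; ring
    rw [tsum_congr f3, tsum_mul_left, ih]
    have : PQ (q ^ 2) (n + 1) = PQ (q ^ 2) n * (1 - (q ^ 2) ^ (n + 1)) := by
      unfold PQ; rw [Finset.prod_range_succ]
    rw [this]
    ring

noncomputable def PI (Q : ℂ) : ℂ := ∏' n : ℕ, (1 - Q ^ (n + 1))

theorem PQ_tendsto (Q : ℂ) (h1 : ‖Q‖ < 1) : Filter.Tendsto (PQ Q) Filter.atTop (nhds (PI Q)) :=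
  (ModularForm.multipliable_one_sub_pow h1).tendsto_prod_tprod_nat

theorem PI_ne (Q : ℂ) (h1 : ‖Q‖ < 1) : PI Q ≠ 0 := by
  unfold PI
  simp only [sub_eq_add_neg]
  refine tprod_one_add_ne_zero_of_summable (f := fun n : ℕ => -Q ^ (n + 1)) (fun n => ?_) ?_
  · rw [← sub_eq_add_neg]; exact one_sub_ne Q h1 n
  · simp only [norm_neg, norm_pow]
    exact (summable_nat_add_iff 1).2 (summable_geometric_of_lt_one (norm_nonneg Q) h1)

theorem gg_tendsto (Q : ℂ) (h1 : ‖Q‖ < 1) (d : ℤ) :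
    Filter.Tendsto (fun n : ℕ => gg Q (n + d)) Filter.atTop (nhds (PI Q)⁻¹) := by
  have h := (PQ_tendsto Q h1).inv₀ (PI_ne Q h1)
  have h2 : Filter.Tendsto (fun n : ℕ => ((n : ℤ) + d).toNat) Filter.atTop Filter.atTop := by
    apply Filter.tendsto_atTop.2
    intro b
    filter_upwards [Filter.eventually_ge_atTop (b + d.natAbs)] with n hn
    omega
  refine (h.comp h2).congr' ?_
  filter_upwards [Filter.eventually_ge_atTop (d.natAbs)] with n hn
  simp only [Function.comp, gg]
  rw [if_pos (by omega)]

theorem gg_bdd (Q : ℂ) (h1 : ‖Q‖ < 1) : ∃ K : ℝ, 0 ≤ K ∧ ∀ k : ℤ, ‖gg Q k‖ ≤ K := by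
  obtain ⟨K, hK⟩ := ((PQ_tendsto Q h1).inv₀ (PI_ne Q h1)).norm.bddAbove_range
  refine ⟨max K 0, le_max_right _ _, fun k => ?_⟩
  unfold gg
  split_ifs with h
  · exact le_trans (hK ⟨k.toNat, rfl⟩) (le_max_left _ _)
  · simp

theorem PQ_bdd (Q : ℂ) (h1 : ‖Q‖ < 1) : ∃ K : ℝ, ∀ k : ℕ, ‖PQ Q k‖ ≤ K := by
  obtain ⟨K, hK⟩ := (PQ_tendsto Q h1).norm.bddAbove_range
  exact ⟨K, fun k => hK ⟨k, rfl⟩⟩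

theorem jac_summable (q : ℂ) (h0 : q ≠ 0) (h1 : ‖q‖ < 1) :
    Summable (fun l : ℤ => ‖(2 * l + 1 : ℂ) * ((-1) ^ l * q ^ (l ^ 2 + l))‖) := by
  have hQ := norm_pos_iff.2 h0
  have s1 := gs ‖q‖ ‖q‖ hQ h1 hQ 1
  have s0 := gs ‖q‖ ‖q‖ hQ h1 hQ 0
  refine Summable.of_nonneg_of_le (fun n => norm_nonneg _) (fun l => ?_) ((s1.mul_left 2).add s0)
  rw [norm_mul, norm_mul, norm_zpow, norm_zpow, norm_neg, norm_one, one_zpow, one_mul,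
    zpow_add₀ hQ.ne']
  have : ‖(2 * l + 1 : ℂ)‖ ≤ 2 * |(l:ℝ)| + 1 := by
    refine (norm_add_le _ _).trans ?_
    simp
  have h3 : 0 ≤ ‖q‖ ^ l ^ 2 * ‖q‖ ^ l := by positivity
  nlinarith [mul_le_mul_of_nonneg_right this h3]

theorem jacobi_Z (q : ℂ) (h0 : q ≠ 0) (h1 : ‖q‖ < 1) :
    ∑' l : ℤ, (2 * l + 1 : ℂ) * ((-1) ^ l * q ^ (l ^ 2 + l)) = 2 * PI (q ^ 2) ^ 3 := by
  have h2 : ‖q ^ 2‖ < 1 := by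
    rw [norm_pow]; exact pow_lt_one₀ (norm_nonneg _) h1 (by norm_num)
  obtain ⟨K, hK0, hK⟩ := gg_bdd (q ^ 2) h2
  obtain ⟨K', hK'⟩ := PQ_bdd (q ^ 2) h2
  have hK'0 : 0 ≤ K' := (norm_nonneg _).trans (hK' 0)
  have hP := PI_ne (q ^ 2) h2
  have T := tendsto_tsum_of_dominated_convergence (𝓕 := Filter.atTop)
    (f := fun (n : ℕ) (l : ℤ) => (2 * l + 1 : ℂ) * bb q n l)
    (g := fun l : ℤ => (2 * l + 1 : ℂ) * ((-1) ^ l * q ^ (l ^ 2 + l)) * (PI (q ^ 2))⁻¹)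
    (bound := fun l : ℤ => ‖(2 * l + 1 : ℂ) * ((-1) ^ l * q ^ (l ^ 2 + l))‖ * (K' * K * K))
    ((jac_summable q h0 h1).mul_right _) ?_ ?_
  · simp only [W_eq q h0 h2] at T
    have T2 : Filter.Tendsto (fun n => 2 * PQ (q ^ 2) n ^ 2) Filter.atTop (nhds (2 * PI (q ^ 2) ^ 2)) :=
      ((PQ_tendsto _ h2).pow 2).const_mul 2
    have := tendsto_nhds_unique T T2
    rw [tsum_mul_right] at this
    rw [← div_eq_mul_inv, div_eq_iff hP] at this
    rw [this]; ring
  · intro l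
    have a1 := gg_tendsto (q ^ 2) h2 (-l)
    have a2 := gg_tendsto (q ^ 2) h2 (l + 1)
    have a3 : Filter.Tendsto (fun n : ℕ => PQ (q ^ 2) (2 * n + 1)) Filter.atTop (nhds (PI (q ^ 2))) := by
      refine (PQ_tendsto (q ^ 2) h2).comp ?_
      apply Filter.tendsto_atTop.2
      intro b
      filter_upwards [Filter.eventually_ge_atTop b] with n hn
      omega
    have := ((a3.mul a1).mul a2).const_mul ((2 * l + 1 : ℂ) * ((-1) ^ l * q ^ (l ^ 2 + l)))
    rw [mul_inv_cancel₀ hP, one_mul] at this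
    refine this.congr (fun n => ?_)
    unfold bb
    rw [sub_eq_add_neg, add_assoc (n : ℤ)]
    ring
  · refine Filter.Eventually.of_forall (fun n l => ?_)
    unfold bb
    rw [← mul_assoc (2 * (l : ℂ) + 1), norm_mul, norm_mul (PQ _ _ * _), norm_mul (PQ _ _)]
    gcongr
    · exact hK' _
    · exact hK _
    · exact hK _

theorem jacobi_N (q : ℂ) (h0 : q ≠ 0) (h1 : ‖q‖ < 1) :
    ∑' l : ℕ, (2 * l + 1 : ℂ) * ((-1) ^ l * q ^ ((l : ℤ) ^ 2 + l)) = PI (q ^ 2) ^ 3 := by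
  have hs := (jac_summable q h0 h1).of_norm
  have e1 := hs.comp_injective (i := fun n : ℕ => (n : ℤ)) Nat.cast_injective
  have e : ∀ n : ℕ, (2 * ((-((n : ℤ) + 1) : ℤ) : ℂ) + 1 : ℂ) * ((-1) ^ (-((n : ℤ) + 1)) * q ^ ((-((n : ℤ) + 1)) ^ 2 + (-((n : ℤ) + 1))))
      = (2 * (n : ℤ) + 1 : ℂ) * ((-1) ^ (n : ℤ) * q ^ ((n : ℤ) ^ 2 + n)) := by
    intro n
    rw [show (-((n : ℤ) + 1)) ^ 2 + (-((n : ℤ) + 1)) = (n : ℤ) ^ 2 + n by ring, zpow_neg, zpow_add₀ (by norm_num)]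
    push_cast
    rcases Int.even_or_odd n with h | h
    · rw [h.neg_one_zpow]; simp; ring
    · rw [h.neg_one_zpow]; simp; ring
  have H := (e1.hasSum).of_nat_of_neg_add_one (f := fun l : ℤ => (2 * l + 1 : ℂ) * ((-1) ^ l * q ^ (l ^ 2 + l)))
    (m' := ∑' n : ℕ, (2 * (n : ℤ) + 1 : ℂ) * ((-1) ^ (n : ℤ) * q ^ ((n : ℤ) ^ 2 + n)))
    (by simp only [e]; exact e1.hasSum)
  have := H.tsum_eq
  rw [jacobi_Z q h0 h1] at this
  simp only [Function.comp] at this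
  simp only [Int.cast_natCast, zpow_natCast] at this ⊢
  linear_combination -(1/2 : ℂ) * this

noncomputable def AA (q x : ℂ) : ℂ := ∑' n : ℤ, (-1) ^ n * q ^ (n ^ 2) * ff (x * q ^ n)
noncomputable def TT (q x : ℂ) : ℂ := ∑' n : ℤ, (-1) ^ n * q ^ (n ^ 2 + n) * x ^ (2 * n + 1)

theorem ex_log (x : ℂ) (hx : x ≠ 0) : ∃ a, x = exp a := ⟨log x, (exp_log hx).symm⟩

theorem neg_one_sq' (k : ℤ) : ((-1 : ℂ) ^ k) * (-1) ^ k = 1 := by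
  rw [← mul_zpow]; simp

theorem neg_one_ne (k : ℤ) : ((-1 : ℂ) ^ k) ≠ 0 := zpow_ne_zero _ (by norm_num)

theorem neg_one_neg_succ (l : ℤ) : (-1 : ℂ) ^ (-(l + 1)) = - (-1) ^ l := by
  rw [zpow_neg, zpow_add₀ (by norm_num), zpow_one]
  apply inv_eq_of_mul_eq_one_left
  linear_combination neg_one_sq' l

theorem norm_neg_one_zpow (k : ℤ) : ‖((-1 : ℂ) ^ k)‖ = 1 := by
  rw [norm_zpow]; simp

theorem q_ff_summable (q p c x : ℂ) (h0 : q ≠ 0) (h1 : ‖q‖ < 1) (hx : x ≠ 0) 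
    (p0 : p ≠ 0) (p1 : ‖p‖ < 1) (hc : c ≠ 0) :
    Summable (fun n : ℤ => ‖c ^ n * p ^ (n ^ 2) * ff (x * q ^ n)‖) := by
  obtain ⟨K, hK⟩ := ff_bdd q x h0 h1 hx
  refine Summable.of_nonneg_of_le (fun _ => norm_nonneg _) (fun n => ?_) ((gsC p c p0 p1 hc).mul_right K)
  rw [norm_mul]
  exact mul_le_mul_of_nonneg_left (hK n) (norm_nonneg _)

theorem AA_summable (q x : ℂ) (h0 : q ≠ 0) (h1 : ‖q‖ < 1) (hx : x ≠ 0) :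
    Summable (fun n : ℤ => ‖(-1) ^ n * q ^ (n ^ 2) * ff (x * q ^ n)‖) :=
  q_ff_summable q q (-1) x h0 h1 hx h0 h1 (by norm_num)

theorem TT_summable (q x : ℂ) (h0 : q ≠ 0) (h1 : ‖q‖ < 1) (hx : x ≠ 0) :
    Summable (fun n : ℤ => ‖(-1) ^ n * q ^ (n ^ 2 + n) * x ^ (2 * n + 1)‖) := by
  have := (gsC q (q * x ^ 2) h0 h1 (by simp [h0, hx])).mul_right ‖x‖
  refine this.congr (fun n => ?_)
  rw [norm_mul, norm_mul, norm_mul, norm_neg_one_zpow, one_mul, ← norm_mul, ← norm_mul, ← norm_mul]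
  congr 1
  obtain ⟨a, rfl⟩ := ex_log x hx
  obtain ⟨t, rfl⟩ := ex_log q h0
  simp only [← exp_int_mul, ← exp_nat_mul, ← exp_add]
  congr 1; push_cast; ring

theorem geo (w : ℂ) (hw : w ≠ 0) (c : ℤ) (n : ℕ) :
    (w - w⁻¹) * ∑ i ∈ Finset.range n, w ^ (2 * (i : ℤ) - c) = w ^ (2 * (n : ℤ) - 1 - c) - w ^ (-1 - c) := by
  induction n with
  | zero => simp
  | succ n ih =>
    rw [Finset.sum_range_succ, mul_add, ih]
    have e1 : w ^ (2 * ((n + 1 : ℕ) : ℤ) - 1 - c) = w * w ^ (2 * (n : ℤ) - c) := by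
      rw [← zpow_one_add₀ hw]; congr 1; push_cast; ring
    have e2 : w ^ (2 * (n : ℤ) - 1 - c) = w⁻¹ * w ^ (2 * (n : ℤ) - c) := by
      rw [← zpow_neg_one, ← zpow_add₀ hw]; congr 1; ring
    rw [e1, e2]; ring

theorem ff_geo (w : ℂ) (hw : w ≠ 0) (h : w ^ 2 ≠ 1) (c : ℤ) (n : ℕ) :
    (w ^ (2 * (n : ℤ) - 1 - c) - w ^ (-1 - c)) * ff w = - ∑ i ∈ Finset.range n, w ^ (2 * (i : ℤ) - c) := by
  rw [← geo w hw]
  have h2 : 1 - w ^ 2 ≠ 0 := fun h3 => h (sub_eq_zero.1 h3).symm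
  have : (w - w⁻¹) * ff w = -1 := by
    unfold ff
    field_simp
    ring
  linear_combination (∑ i ∈ Finset.range n, w ^ (2 * (i : ℤ) - c)) * this

theorem qpow_ne (q : ℂ) (h1 : ‖q‖ < 1) (N : ℤ) (hN : N ≠ 0) : q ^ N ≠ 1 := by
  intro h
  have h2 : ‖q‖ ^ N = 1 := by rw [← norm_zpow, h, norm_one]
  rw [zpow_eq_one_iff_right₀ (norm_nonneg _) h1.ne] at h2
  exact hN h2

/-- The kernel in the evaluation of `AA * TT`. -/
noncomputable def KK (q x : ℂ) (N : ℤ) (l : ℕ) : ℂ :=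
  (-1) ^ (l : ℤ) * q ^ ((l : ℤ) ^ 2 + l) * (x ^ (2 * N) * q ^ (2 * N ^ 2)) *
    ∑ i ∈ Finset.range (2 * l + 1), (q ^ (-N)) ^ (2 * (i : ℤ) - 2 * l)

theorem KK_summable (q x : ℂ) (h0 : q ≠ 0) (h1 : ‖q‖ < 1) (hx : x ≠ 0) :
    Summable (fun z : ℤ × ℕ => KK q x z.1 z.2) := by
  have hQ := norm_pos_iff.2 h0
  have s1 := gsC q (x ^ 2) h0 h1 (pow_ne_zero _ hx)
  have s2 : Summable (fun l : ℕ => ‖(2 * (l : ℝ) + 1) * ‖q‖ ^ l‖) := by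
    have a := (summable_pow_mul_geometric_of_norm_lt_one 1 (r := ‖q‖) (by simpa using h1)).mul_left 2
    have b := (summable_geometric_of_lt_one (norm_nonneg q) h1)
    refine (a.add b).congr (fun l => ?_)
    rw [Real.norm_of_nonneg (by positivity)]; ring
  have s := s1.mul_of_nonneg s2 (fun _ => norm_nonneg _) (fun _ => norm_nonneg _)
  refine Summable.of_norm_bounded s (fun z => ?_)
  obtain ⟨N, l⟩ := z
  simp only
  unfold KK
  rw [norm_mul, norm_mul, norm_mul, norm_neg_one_zpow, one_mul, norm_mul, norm_mul,
    Real.norm_of_nonneg (by positivity : (0:ℝ) ≤ (2 * (l : ℝ) + 1) * ‖q‖ ^ l)]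
  have key : ∀ i ∈ Finset.range (2 * l + 1),
      ‖q ^ ((l : ℤ) ^ 2 + l)‖ * ‖q ^ (2 * N ^ 2)‖ * ‖(q ^ (-N)) ^ (2 * (i : ℤ) - 2 * l)‖ ≤ ‖q ^ (N ^ 2)‖ * ‖q‖ ^ l := by
    intro i hi
    rw [Finset.mem_range] at hi
    rw [← norm_mul, ← norm_mul, ← zpow_mul, ← zpow_add₀ h0, ← zpow_add₀ h0, norm_zpow, norm_zpow,
      ← zpow_natCast ‖q‖ l, ← zpow_add₀ hQ.ne']
    apply zpow_le_zpow_right_of_le_one₀ hQ h1.le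
    set e : ℤ := (i : ℤ) - l with he
    have h3 : -(l : ℤ) ≤ e := by omega
    have h4 : e ≤ l := by omega
    have : 2 * (i : ℤ) - 2 * l = 2 * e := by omega
    rw [this]
    nlinarith [sq_nonneg (N - e), mul_nonneg (by linarith : (0:ℤ) ≤ l - e) (by linarith : (0:ℤ) ≤ l + e)]
  calc _ ≤ ‖q ^ ((l : ℤ) ^ 2 + l)‖ * (‖x ^ (2 * N)‖ * ‖q ^ (2 * N ^ 2)‖) * 
          ∑ i ∈ Finset.range (2 * l + 1), ‖(q ^ (-N)) ^ (2 * (i : ℤ) - 2 * l)‖ := by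
        gcongr
        exact norm_sum_le _ _
    _ = ‖x ^ (2 * N)‖ * ∑ i ∈ Finset.range (2 * l + 1), 
        ‖q ^ ((l : ℤ) ^ 2 + l)‖ * ‖q ^ (2 * N ^ 2)‖ * ‖(q ^ (-N)) ^ (2 * (i : ℤ) - 2 * l)‖ := by
        rw [← Finset.mul_sum]; ring
    _ ≤ ‖x ^ (2 * N)‖ * ∑ i ∈ Finset.range (2 * l + 1), ‖q ^ (N ^ 2)‖ * ‖q‖ ^ l := by
        exact mul_le_mul_of_nonneg_left (Finset.sum_le_sum key) (norm_nonneg _)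
    _ = _ := by
        rw [Finset.sum_const, Finset.card_range, nsmul_eq_mul, show x ^ (2 * N) = (x ^ 2) ^ N by
          rw [zpow_mul]; norm_cast]
        push_cast; ring

theorem antisym_zero (h : ℤ → ℂ) (N : ℤ) (hh : ∀ l, h (2 * N - 1 - l) = - h l) : ∑' l, h l = 0 := by
  have := (Equiv.subLeft (2 * N - 1)).tsum_eq h
  simp only [Equiv.subLeft_apply, hh] at this
  rw [tsum_neg] at this
  linear_combination -(1/2 : ℂ) * this

theorem KK_zero (q x : ℂ) (h0 : q ≠ 0) (h1 : ‖q‖ < 1) (hx : x ≠ 0) (N : ℤ) (hN : N ≠ 0) :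
    ∑' l : ℕ, KK q x N l = 0 := by
  set w := q ^ (-N) with hw
  have hw0 : w ≠ 0 := zpow_ne_zero _ h0
  have hw2 : w - w⁻¹ ≠ 0 := by
    intro h
    have : w * w = 1 := by
      rw [sub_eq_zero] at h
      nth_rewrite 1 [h]
      exact inv_mul_cancel₀ hw0
    rw [hw, ← zpow_add₀ h0] at this
    exact qpow_ne q h1 _ (by omega) this
  have hs : Summable (fun n : ℤ => (-1) ^ n * q ^ (n ^ 2 + n) * w ^ (2 * n + 1)) := (TT_summable q w h0 h1 hw0).of_norm
  have hz : ∑' n : ℤ, (-1) ^ n * q ^ (n ^ 2 + n) * w ^ (2 * n + 1) = 0 := by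
    apply antisym_zero _ N
    intro l
    have : (-1 : ℂ) ^ (2 * N - 1 - l) = - (-1) ^ l := by
      rw [zpow_sub₀ (by norm_num), zpow_sub₀ (by norm_num), zpow_mul]
      have := neg_one_sq' l
      have := neg_one_ne l
      field_simp
      simp [sq, neg_one_sq']
    rw [this, neg_mul, neg_mul, mul_assoc, mul_assoc]
    congr 2
    rw [hw, ← zpow_mul, ← zpow_mul, ← zpow_add₀ h0, ← zpow_add₀ h0]
    congr 1; ring
  have hN := hs.hasSum
  rw [hz] at hN
  have e1 := hs.comp_injective (i := fun n : ℕ => (n : ℤ)) Nat.cast_injective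
  have e2 := hs.comp_injective (i := fun n : ℕ => -((n : ℤ) + 1)) (fun a b h => by simpa using h)
  have H := (e1.hasSum.of_nat_of_neg_add_one e2.hasSum (f := fun n : ℤ => (-1) ^ n * q ^ (n ^ 2 + n) * w ^ (2 * n + 1))).unique hN
  rw [← e1.tsum_add e2] at H
  have c : ∀ l : ℕ, (w - w⁻¹) * KK q x N l = (x ^ (2 * N) * q ^ (2 * N ^ 2)) * 
     (((fun n : ℤ => (-1) ^ n * q ^ (n ^ 2 + n) * w ^ (2 * n + 1)) ∘ (fun n : ℕ => (n : ℤ))) l + 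
      ((fun n : ℤ => (-1) ^ n * q ^ (n ^ 2 + n) * w ^ (2 * n + 1)) ∘ (fun n : ℕ => -((n : ℤ) + 1))) l) := by
    intro l
    simp only [Function.comp]
    unfold KK
    have g := geo w hw0 (2 * l) (2 * l + 1)
    rw [← hw, mul_left_comm, g]
    have s := neg_one_neg_succ (l : ℤ)
    rw [s, show (-((l : ℤ) + 1)) ^ 2 + (-((l : ℤ) + 1)) = (l : ℤ) ^ 2 + l by ring,
      show 2 * ((2 * l + 1 : ℕ) : ℤ) - 1 - 2 * (l : ℤ) = 2 * l + 1 by push_cast; ring,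
      show 2 * (-((l : ℤ) + 1)) + 1 = -1 - 2 * l by ring]
    ring
  have := tsum_congr (L := SummationFilter.unconditional ℕ) c
  rw [tsum_mul_left, tsum_mul_left, H, mul_zero] at this
  exact (mul_eq_zero.1 this).resolve_left hw2

theorem KK_sum (q x : ℂ) (h0 : q ≠ 0) (h1 : ‖q‖ < 1) (hx : x ≠ 0) :
    ∑' l : ℕ, ∑' N : ℤ, KK q x N l = PI (q ^ 2) ^ 3 := by
  rw [Summable.tsum_comm (f := fun (N : ℤ) (l : ℕ) => KK q x N l) (KK_summable q x h0 h1 hx)]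
  rw [tsum_eq_single 0 (fun N hN => KK_zero q x h0 h1 hx N hN), ← jacobi_N q h0 h1]
  apply tsum_congr
  intro l
  simp [KK]
  ring

theorem tsum_shift (f : ℤ → ℂ) (d : ℤ) : ∑' k, f k = ∑' N, f (N - d) :=
  ((Equiv.subRight d).tsum_eq f).symm

theorem summable_shift (f : ℤ → ℂ) (hf : Summable f) (d : ℤ) : Summable (fun N => f (N - d)) :=
  (Equiv.subRight d).summable_iff.2 hf

set_option maxHeartbeats 1000000 in
theorem AT (q x : ℂ) (h0 : q ≠ 0) (h1 : ‖q‖ < 1) (hx : x ≠ 0) (hp : ∀ n : ℤ, (x * q ^ n) ^ 2 ≠ 1) :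
    AA q x * TT q x = - PI (q ^ 2) ^ 3 := by
  have sA := AA_summable q x h0 h1 hx
  have sT := TT_summable q x h0 h1 hx
  let H : ℤ → ℤ → ℂ := fun k l => (-1) ^ l * q ^ (l ^ 2 + l) * (x * q ^ k) ^ (2 * k + 2 * l + 1) * ff (x * q ^ k)
  let e : ℤ × ℤ ≃ ℤ × ℤ :=
    { toFun := fun z => (z.1, z.2 + z.1), invFun := fun z => (z.1, z.2 - z.1),
      left_inv := fun z => by simp, right_inv := fun z => by simp }
  have hH : ∀ k l, ((-1) ^ k * q ^ (k ^ 2) * ff (x * q ^ k)) * ((-1) ^ (l + k) * q ^ ((l + k) ^ 2 + (l + k)) * x ^ (2 * (l + k) + 1)) = H k l := by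
    intro k l
    simp only [H]
    rw [zpow_add₀ (by norm_num : (-1:ℂ) ≠ 0) l k]
    have e1 : q ^ (k ^ 2) * (q ^ ((l + k) ^ 2 + (l + k)) * x ^ (2 * (l + k) + 1)) = q ^ (l ^ 2 + l) * (x * q ^ k) ^ (2 * k + 2 * l + 1) := by
      obtain ⟨a, rfl⟩ := ex_log x hx
      obtain ⟨t, rfl⟩ := ex_log q h0
      simp only [← exp_int_mul, ← exp_nat_mul, ← exp_add]
      congr 1; push_cast; ring
    linear_combination ((-1) ^ l * ff (x * q ^ k) * q ^ (k ^ 2) * (q ^ ((l + k) ^ 2 + (l + k)) * x ^ (2 * (l + k) + 1))) * neg_one_sq' k + ((-1) ^ l * ff (x * q ^ k)) * e1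
  have sH : Summable (Function.uncurry H) := by
    have := e.summable_iff.2 (summable_mul_of_summable_norm sA sT)
    refine this.congr (fun z => ?_)
    exact hH z.1 z.2
  have step1 : AA q x * TT q x = ∑' l : ℤ, ∑' k : ℤ, H k l := by
    unfold AA TT
    rw [tsum_mul_tsum_of_summable_norm sA sT, ← e.tsum_eq, Summable.tsum_comm sH]
    refine (tsum_congr (fun z => ?_)).trans sH.tsum_prod
    exact hH z.1 z.2
  have sH' : Summable (fun z : ℤ × ℤ => H z.2 z.1) := sH.prod_symm
  have sl : ∀ l, Summable (fun k => H k l) := fun l => sH'.prod_factor l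
  have sh : Summable (fun l => ∑' k : ℤ, H k l) := sH'.prod
  have e1 := sh.comp_injective (i := fun n : ℕ => (n : ℤ)) Nat.cast_injective
  have e2 := sh.comp_injective (i := fun n : ℕ => -((n : ℤ) + 1)) (fun a b h => by simpa using h)
  have HH := (e1.hasSum.of_nat_of_neg_add_one e2.hasSum (f := fun l => ∑' k : ℤ, H k l)).tsum_eq
  rw [step1, HH, ← e1.tsum_add e2, ← KK_sum q x h0 h1 hx, ← tsum_neg]
  apply tsum_congr
  intro l
  simp only [Function.comp]
  rw [← (sl _).tsum_add (sl _)]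
  have c : ∀ k : ℤ, H k l + H k (-((l : ℤ) + 1)) = ∑ i ∈ Finset.range (2 * l + 1),
      -((-1) ^ (l : ℤ) * q ^ ((l : ℤ) ^ 2 + l)) * ((x * q ^ k) ^ (2 * k + (2 * (i : ℤ) - 2 * l))) := by
    intro k
    have hw0 : x * q ^ k ≠ 0 := mul_ne_zero hx (zpow_ne_zero _ h0)
    have g := ff_geo (x * q ^ k) hw0 (hp k) (2 * l) (2 * l + 1)
    simp only [H]
    simp only [zpow_add₀ hw0 (2 * k) (2 * (_ : ℤ) - 2 * l)]
    rw [← Finset.mul_sum, ← Finset.mul_sum]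
    have s := neg_one_neg_succ (l : ℤ)
    have a1 : (x * q ^ k) ^ (2 * k + 2 * (l : ℤ) + 1) = (x * q ^ k) ^ (2 * k) * (x * q ^ k) ^ (2 * ((2 * l + 1 : ℕ) : ℤ) - 1 - 2 * (l : ℤ)) := by
      rw [← zpow_add₀ hw0]; congr 1; push_cast; ring
    have a2 : (x * q ^ k) ^ (2 * k + 2 * (-((l : ℤ) + 1)) + 1) = (x * q ^ k) ^ (2 * k) * (x * q ^ k) ^ (-1 - 2 * (l : ℤ)) := by
      rw [← zpow_add₀ hw0]; congr 1; push_cast; ring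
    rw [s, show (-((l : ℤ) + 1)) ^ 2 + (-((l : ℤ) + 1)) = (l : ℤ) ^ 2 + l by ring, a1, a2]
    linear_combination (-1) ^ (l : ℤ) * q ^ ((l : ℤ) ^ 2 + l) * (x * q ^ k) ^ (2 * k) * g
  have q2 : ‖q ^ 2‖ < 1 := by
    rw [norm_pow]; exact pow_lt_one₀ (norm_nonneg _) h1 (by norm_num)
  have sth : ∀ i : ℕ, Summable (fun k : ℤ => -((-1) ^ (l : ℤ) * q ^ ((l : ℤ) ^ 2 + l)) * ((x * q ^ k) ^ (2 * k + (2 * (i : ℤ) - 2 * l)))) := by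
    intro i
    have := (gsC (q ^ 2) (x ^ 2 * q ^ (2 * (i : ℤ) - 2 * l)) (pow_ne_zero _ h0) q2 (mul_ne_zero (pow_ne_zero _ hx) (zpow_ne_zero _ h0))).of_norm
    refine ((this.mul_left (x ^ (2 * (i : ℤ) - 2 * l))).mul_left (-((-1) ^ (l : ℤ) * q ^ ((l : ℤ) ^ 2 + l)))).congr (fun k => ?_)
    congr 1
    obtain ⟨a, rfl⟩ := ex_log x hx
    obtain ⟨t, rfl⟩ := ex_log q h0
    simp only [← exp_int_mul, ← exp_nat_mul, ← exp_add]
    congr 1; push_cast; ring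
  rw [tsum_congr c, Summable.tsum_finsetSum (fun i _ => sth i)]
  have shift : ∀ i : ℕ, ∑' k : ℤ, -((-1) ^ (l : ℤ) * q ^ ((l : ℤ) ^ 2 + l)) * ((x * q ^ k) ^ (2 * k + (2 * (i : ℤ) - 2 * l)))
      = ∑' N : ℤ, -((-1) ^ (l : ℤ) * q ^ ((l : ℤ) ^ 2 + l)) * ((x * q ^ (N - (i - l))) ^ (2 * (N - (i - l)) + (2 * (i : ℤ) - 2 * l))) := by
    intro i
    exact tsum_shift (fun k : ℤ => -((-1) ^ (l : ℤ) * q ^ ((l : ℤ) ^ 2 + l)) * ((x * q ^ k) ^ (2 * k + (2 * (i : ℤ) - 2 * l)))) ((i : ℤ) - l)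
  have sth' : ∀ i : ℕ, Summable (fun N : ℤ => -((-1) ^ (l : ℤ) * q ^ ((l : ℤ) ^ 2 + l)) * ((x * q ^ (N - (i - l))) ^ (2 * (N - (i - l)) + (2 * (i : ℤ) - 2 * l)))) := by
    intro i
    exact summable_shift _ (sth i) ((i : ℤ) - l)
  rw [Finset.sum_congr rfl (fun i _ => shift i), ← Summable.tsum_finsetSum (fun i _ => sth' i), ← tsum_neg]
  apply tsum_congr
  intro N
  unfold KK
  rw [Finset.mul_sum, ← Finset.sum_neg_distrib]
  apply Finset.sum_congr rfl
  intro i _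
  rw [neg_mul, mul_assoc ((-1) ^ (l : ℤ) * q ^ ((l : ℤ) ^ 2 + l))]
  congr 2
  obtain ⟨a, rfl⟩ := ex_log x hx
  obtain ⟨t, rfl⟩ := ex_log q h0
  simp only [← exp_int_mul, ← exp_nat_mul, ← exp_add]
  congr 1; push_cast; ring

theorem TT_quasi (q x : ℂ) (h0 : q ≠ 0) (hx : x ≠ 0) (p : ℤ) :
    TT q x = (-1) ^ p * x ^ (2 * p) * q ^ (p ^ 2) * TT q (x * q ^ p) := by
  unfold TT
  rw [← (Equiv.addRight p).tsum_eq, ← tsum_mul_left]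
  apply tsum_congr
  intro n
  simp only [Equiv.coe_addRight]
  rw [zpow_add₀ (by norm_num : (-1:ℂ) ≠ 0)]
  have : q ^ ((n + p) ^ 2 + (n + p)) * x ^ (2 * (n + p) + 1) = x ^ (2 * p) * q ^ (p ^ 2) * (q ^ (n ^ 2 + n) * (x * q ^ p) ^ (2 * n + 1)) := by
    obtain ⟨a, rfl⟩ := ex_log x hx
    obtain ⟨t, rfl⟩ := ex_log q h0
    simp only [← exp_int_mul, ← exp_nat_mul, ← exp_add]
    congr 1; push_cast; ring
  linear_combination (-1) ^ n * (-1) ^ p * this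

theorem AA_quasi (q x : ℂ) (h0 : q ≠ 0) (h1 : ‖q‖ < 1) (hx : x ≠ 0) (hp : ∀ n : ℤ, (x * q ^ n) ^ 2 ≠ 1) (p : ℤ) :
    AA q (x * q ^ p) = (-1) ^ p * x ^ (2 * p) * q ^ (p ^ 2) * AA q x := by
  have h2 : ‖q ^ 2‖ < 1 := by
    rw [norm_pow]; exact pow_lt_one₀ (norm_nonneg _) h1 (by norm_num)
  have a := AT q x h0 h1 hx hp
  have b := AT q (x * q ^ p) h0 h1 (mul_ne_zero hx (zpow_ne_zero _ h0)) (fun n => by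
    rw [mul_assoc, ← zpow_add₀ h0]; exact hp _)
  have hP : PI (q ^ 2) ^ 3 ≠ 0 := pow_ne_zero _ (PI_ne _ h2)
  have hT : TT q (x * q ^ p) ≠ 0 := by
    intro h; rw [h, mul_zero] at b; exact hP (by linear_combination b)
  apply mul_right_cancel₀ hT
  rw [b, ← a, TT_quasi q x h0 hx p]
  ring

noncomputable def LL (M : ℕ) (q x y : ℂ) : ℂ := ∑' j : ℤ, (-1) ^ j * (x / y) ^ (M * j) * q ^ ((M + 1) * j ^ 2)
noncomputable def PhX (M : ℕ) (q x y : ℂ) : ℂ := ∑' n : ℤ, (x * y) ^ (M * n) * q ^ (M * n ^ 2) * ff (x * q ^ n)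
noncomputable def Th (M : ℕ) (q x y : ℂ) : ℂ :=
  ∑' p : ℤ, (-1) ^ p * x ^ ((M + 2) * p) * y ^ (M * p) * q ^ ((M + 1) * p ^ 2)
noncomputable def YY (M : ℕ) (q x y : ℂ) (e : ℤ) : ℂ :=
  ∑' p : ℤ, (x * y) ^ (M * p) * q ^ (M * p ^ 2) * (x * q ^ p) ^ e
noncomputable def VV (M : ℕ) (q x y : ℂ) (L : ℕ) : ℂ :=
  (-1) ^ L * q ^ (L ^ 2) * ∑ i ∈ Finset.range (M * L), q ^ (L * (2 * i + 1)) *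
    (YY M q x y (-(2 * (i : ℤ) + 1)) - YY M q x y (2 * (i : ℤ) + 1))

section
variable (M : ℕ) (q x y : ℂ) (hM : 0 < M) (h0 : q ≠ 0) (h1 : ‖q‖ < 1) (hx : x ≠ 0) (hy : y ≠ 0)

noncomputable def DD (l p : ℤ) : ℂ :=
  (x * y) ^ (M * p) * q ^ (M * p ^ 2) * ((-1) ^ l * q ^ (l ^ 2) *
    (((x * q ^ (p + l)) ^ (2 * M * l) - 1) * ff (x * q ^ (p + l))))

theorem qM (h1 : ‖q‖ < 1) (hM : 0 < M) : ‖q ^ M‖ < 1 := by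
  rw [norm_pow]; exact pow_lt_one₀ (norm_nonneg _) h1 hM.ne'

include hM h0 h1 hx hy in
theorem cp_summable : Summable (fun p : ℤ => ‖(x * y) ^ (M * p) * q ^ (M * p ^ 2)‖) := by
  refine (gsC (q ^ M) ((x * y) ^ M) (pow_ne_zero _ h0) (qM M q h1 hM) (pow_ne_zero _ (mul_ne_zero hx hy))).congr (fun p => ?_)
  rw [zpow_mul, zpow_mul, zpow_natCast, zpow_natCast]

include hM h0 h1 hx hy in
theorem YY_summable (e : ℤ) : Summable (fun p : ℤ => (x * y) ^ (M * p) * q ^ (M * p ^ 2) * (x * q ^ p) ^ e) := by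
  refine ((gsC (q ^ M) ((x * y) ^ M * q ^ e) (pow_ne_zero _ h0) (qM M q h1 hM) (mul_ne_zero (pow_ne_zero _ (mul_ne_zero hx hy)) (zpow_ne_zero _ h0))).of_norm.mul_right (x ^ e)).congr (fun p => ?_)
  obtain ⟨a, rfl⟩ := ex_log x hx
  obtain ⟨b, rfl⟩ := ex_log y hy
  obtain ⟨t, rfl⟩ := ex_log q h0
  simp only [← exp_int_mul, ← exp_nat_mul, ← exp_add]
  congr 1; push_cast; ring

include hM h0 h1 hx hy in
theorem half (hp : ∀ n : ℤ, (x * q ^ n) ^ 2 ≠ 1) :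
    HasSum (fun l : ℤ => ∑' p : ℤ, DD M q x y l p) (LL M q x y * PhX M q x y - AA q x * Th M q x y) := by
  have sL : Summable (fun j : ℤ => ‖(-1) ^ j * (x / y) ^ (M * j) * q ^ ((M + 1) * j ^ 2)‖) := by
    refine (gsC (q ^ (M + 1)) (-(x / y) ^ M) (pow_ne_zero _ h0) (qM (M + 1) q h1 (by omega)) (neg_ne_zero.2 (pow_ne_zero _ (div_ne_zero hx hy)))).congr (fun p => ?_)
    rw [zpow_mul, zpow_mul, zpow_natCast, ← mul_zpow, neg_one_mul]
    norm_cast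
  have sP : Summable (fun n : ℤ => ‖(x * y) ^ (M * n) * q ^ (M * n ^ 2) * ff (x * q ^ n)‖) := by
    refine (q_ff_summable q (q ^ M) ((x * y) ^ M) x h0 h1 hx (pow_ne_zero _ h0) (qM M q h1 hM) (pow_ne_zero _ (mul_ne_zero hx hy))).congr (fun p => ?_)
    rw [zpow_mul, zpow_mul, zpow_natCast, zpow_natCast]
  have sc := cp_summable M q x y hM h0 h1 hx hy
  let F : ℤ × ℤ → ℂ := fun z => (x * y) ^ (M * z.2) * q ^ (M * z.2 ^ 2) * ((-1) ^ z.1 * q ^ (z.1 ^ 2) *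
    ((x * q ^ (z.2 + z.1)) ^ (2 * M * z.1) * ff (x * q ^ (z.2 + z.1))))
  let F' : ℤ × ℤ → ℂ := fun z => (x * y) ^ (M * z.2) * q ^ (M * z.2 ^ 2) * ((-1) ^ z.1 * q ^ (z.1 ^ 2) *
    ff (x * q ^ (z.2 + z.1)))
  let e : ℤ × ℤ ≃ ℤ × ℤ :=
    { toFun := fun z => (z.1, z.2 + z.1), invFun := fun z => (z.1, z.2 - z.1),
      left_inv := fun z => by simp, right_inv := fun z => by simp }
  have HF : HasSum F (LL M q x y * PhX M q x y) := by
    unfold LL PhX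
    rw [tsum_mul_tsum_of_summable_norm sL sP]
    have := e.hasSum_iff.2 (summable_mul_of_summable_norm sL sP).hasSum
    refine this.congr_fun ?_ |> fun h => h
    intro z
    obtain ⟨l, p⟩ := z
    simp only [F, e, Function.comp, Equiv.coe_fn_mk]
    have : (x / y) ^ (M * l) * q ^ ((M + 1) * l ^ 2) * ((x * y) ^ (M * (p + l)) * q ^ (M * (p + l) ^ 2)) 
      = (x * y) ^ (M * p) * q ^ (M * p ^ 2) * (q ^ (l ^ 2) * (x * q ^ (p + l)) ^ (2 * M * l)) := by
      obtain ⟨a, rfl⟩ := ex_log x hx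
      obtain ⟨b, rfl⟩ := ex_log y hy
      obtain ⟨t, rfl⟩ := ex_log q h0
      simp only [← exp_int_mul, ← exp_nat_mul, ← exp_add, ← exp_sub]
      congr 1; push_cast; ring
    linear_combination -(-1) ^ l * ff (x * q ^ (p + l)) * this
  have sF' : Summable F' := by
    obtain ⟨K, hK⟩ := ff_bdd q x h0 h1 hx
    have s1 := gsC q 1 h0 h1 one_ne_zero
    have s := (s1.mul_of_nonneg sc (fun _ => norm_nonneg _) (fun _ => norm_nonneg _)).mul_right K
    refine Summable.of_norm_bounded s (fun z => ?_)
    simp only [F']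
    rw [norm_mul, norm_mul ((-1) ^ z.1 * _), norm_mul ((-1) ^ z.1), norm_neg_one_zpow, one_mul, one_zpow, one_mul]
    have := hK (z.2 + z.1)
    have h3 : 0 ≤ ‖q ^ (z.1 ^ 2)‖ * ‖(x * y) ^ (M * z.2) * q ^ (M * z.2 ^ 2)‖ := by positivity
    nlinarith [mul_le_mul_of_nonneg_left this h3]
  have HF' : HasSum F' (AA q x * Th M q x y) := by
    convert sF'.hasSum using 1
    have := (sF'.prod_symm).tsum_prod
    rw [← (Equiv.prodComm ℤ ℤ).tsum_eq F']
    refine Eq.trans ?_ this.symm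
    unfold Th
    rw [← tsum_mul_left]
    apply tsum_congr
    intro p
    simp only [F', Prod.swap]
    rw [tsum_mul_left]
    have a := AA_quasi q x h0 h1 hx hp p
    have b : AA q (x * q ^ p) = ∑' l : ℤ, (-1) ^ l * q ^ (l ^ 2) * ff (x * q ^ (p + l)) := by
      unfold AA
      apply tsum_congr; intro l
      rw [mul_assoc x, ← zpow_add₀ h0]
    rw [← b, a]
    have : x ^ ((M + 2) * p) * y ^ (M * p) * q ^ ((M + 1) * p ^ 2) = (x * y) ^ (M * p) * q ^ (M * p ^ 2) * (x ^ (2 * p) * q ^ (p ^ 2)) := by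
      obtain ⟨a, rfl⟩ := ex_log x hx
      obtain ⟨b, rfl⟩ := ex_log y hy
      obtain ⟨t, rfl⟩ := ex_log q h0
      simp only [← exp_int_mul, ← exp_nat_mul, ← exp_add]
      congr 1; push_cast; ring
    linear_combination AA q x * (-1) ^ p * this
  have HD := HF.sub HF'
  have e3 : (fun z => F z - F' z) = fun z : ℤ × ℤ => DD M q x y z.1 z.2 := by
    funext z
    simp only [F, F', DD]
    ring
  rw [e3] at HD
  exact HD.prod_fiberwise (fun l => (HD.summable.prod_factor l).hasSum)

include hM h0 h1 hx hy in
theorem vv_pos (hp : ∀ n : ℤ, (x * q ^ n) ^ 2 ≠ 1) (L : ℕ) :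
    ∑' p : ℤ, DD M q x y L p = (-1) ^ L * q ^ (L ^ 2) * ∑ i ∈ Finset.range (M * L), q ^ (L * (2 * i + 1)) *
      (- YY M q x y (2 * (i : ℤ) + 1)) := by
  have c : ∀ p : ℤ, DD M q x y L p = ∑ i ∈ Finset.range (M * L), (-1) ^ L * q ^ (L ^ 2) * (q ^ (L * (2 * i + 1)) *
      (-((x * y) ^ (M * p) * q ^ (M * p ^ 2) * (x * q ^ p) ^ (2 * (i : ℤ) + 1)))) := by
    intro p
    have hw0 : x * q ^ (p + (L : ℤ)) ≠ 0 := mul_ne_zero hx (zpow_ne_zero _ h0)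
    have g := ff_geo (x * q ^ (p + (L : ℤ))) hw0 (hp _) (-1) (M * L)
    rw [show 2 * ((M * L : ℕ) : ℤ) - 1 - -1 = 2 * M * L by push_cast; ring, show (-1 : ℤ) - -1 = 0 by ring, zpow_zero] at g
    unfold DD
    rw [g, ← Finset.sum_neg_distrib, Finset.mul_sum, Finset.mul_sum]
    apply Finset.sum_congr rfl
    intro i _
    have : (x * q ^ (p + (L : ℤ))) ^ (2 * (i : ℤ) - -1) = q ^ (L * (2 * i + 1)) * (x * q ^ p) ^ (2 * (i : ℤ) + 1) := by
      obtain ⟨a, rfl⟩ := ex_log x hx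
      obtain ⟨t, rfl⟩ := ex_log q h0
      simp only [← exp_int_mul, ← exp_nat_mul, ← exp_add]
      congr 1; push_cast; ring
    rw [this, zpow_natCast, show (L : ℤ) ^ 2 = ((L ^ 2 : ℕ) : ℤ) by push_cast; ring, zpow_natCast]
    ring
  rw [tsum_congr c, Summable.tsum_finsetSum, Finset.mul_sum]
  · apply Finset.sum_congr rfl
    intro i _
    rw [tsum_mul_left, tsum_mul_left, tsum_neg]
    rfl
  · intro i _
    exact (((YY_summable M q x y hM h0 h1 hx hy _).neg).mul_left _).mul_left _

include hM h0 h1 hx hy in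
theorem vv_neg (hp : ∀ n : ℤ, (x * q ^ n) ^ 2 ≠ 1) (L : ℕ) :
    ∑' p : ℤ, DD M q x y (-L) p = (-1) ^ L * q ^ (L ^ 2) * ∑ i ∈ Finset.range (M * L), q ^ (L * (2 * i + 1)) *
      (YY M q x y (-(2 * (i : ℤ) + 1))) := by
  have c : ∀ p : ℤ, DD M q x y (-L) p = ∑ i ∈ Finset.range (M * L), (-1) ^ L * q ^ (L ^ 2) * (q ^ (L * (2 * i + 1)) *
      ((x * y) ^ (M * p) * q ^ (M * p ^ 2) * (x * q ^ p) ^ (-(2 * (i : ℤ) + 1)))) := by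
    intro p
    have hw0 : x * q ^ (p + -(L : ℤ)) ≠ 0 := mul_ne_zero hx (zpow_ne_zero _ h0)
    have g := ff_geo (x * q ^ (p + -(L : ℤ))) hw0 (hp _) (2 * M * L - 1) (M * L)
    rw [show 2 * ((M * L : ℕ) : ℤ) - 1 - (2 * M * L - 1) = 0 by push_cast; ring, 
      show (-1 : ℤ) - (2 * M * L - 1) = 2 * M * (-L) by ring, zpow_zero] at g
    have g2 : ((x * q ^ (p + -(L : ℤ))) ^ (2 * (M : ℤ) * (-L)) - 1) * ff (x * q ^ (p + -(L : ℤ))) =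
      ∑ i ∈ Finset.range (M * L), (x * q ^ (p + -(L : ℤ))) ^ (2 * (i : ℤ) - (2 * M * L - 1)) := by
      linear_combination -g
    unfold DD
    rw [g2, ← Finset.sum_range_reflect, Finset.mul_sum, Finset.mul_sum]
    apply Finset.sum_congr rfl
    intro i hi
    rw [Finset.mem_range] at hi
    have : (x * q ^ (p + -(L : ℤ))) ^ (2 * ((M * L - 1 - i : ℕ) : ℤ) - (2 * M * L - 1)) = q ^ (L * (2 * i + 1)) * (x * q ^ p) ^ (-(2 * (i : ℤ) + 1)) := by
      rw [show (2 * ((M * L - 1 - i : ℕ) : ℤ) - (2 * M * L - 1)) = -(2 * (i : ℤ) + 1) by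
        rw [Nat.cast_sub (by omega), Nat.cast_sub (by omega)]; push_cast; ring]
      obtain ⟨a, rfl⟩ := ex_log x hx
      obtain ⟨t, rfl⟩ := ex_log q h0
      simp only [← exp_int_mul, ← exp_nat_mul, ← exp_add]
      congr 1; push_cast; ring
    have s : (-1 : ℂ) ^ (-(L : ℤ)) = (-1) ^ L := by
      rw [zpow_neg]
      apply inv_eq_of_mul_eq_one_left
      rw [← zpow_natCast]
      exact neg_one_sq' _
    rw [this, s, show (-(L : ℤ)) ^ 2 = ((L ^ 2 : ℕ) : ℤ) by push_cast; ring, zpow_natCast]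
    ring
  rw [tsum_congr c, Summable.tsum_finsetSum, Finset.mul_sum]
  · apply Finset.sum_congr rfl
    intro i _
    rw [tsum_mul_left, tsum_mul_left]
    rfl
  · intro i _
    exact ((YY_summable M q x y hM h0 h1 hx hy _).mul_left _).mul_left _

include hM h0 h1 hx hy in
theorem half' (hp : ∀ n : ℤ, (x * q ^ n) ^ 2 ≠ 1) :
    HasSum (fun j : ℕ => VV M q x y (j + 1)) (LL M q x y * PhX M q x y - AA q x * Th M q x y) := by
  have h := (half M q x y hM h0 h1 hx hy hp).nat_add_neg
  have c : ∀ L : ℕ, ∑' p : ℤ, DD M q x y L p + ∑' p : ℤ, DD M q x y (-L) p = VV M q x y L := by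
    intro L
    rw [vv_pos M q x y hM h0 h1 hx hy hp, vv_neg M q x y hM h0 h1 hx hy hp, ← mul_add, ← Finset.sum_add_distrib]
    unfold VV
    congr 1
    apply Finset.sum_congr rfl
    intro i _
    ring
  simp only [c] at h
  have z : ∑' p : ℤ, DD M q x y 0 p = 0 := by simp [DD]
  rw [z, add_zero] at h
  have := (hasSum_nat_add_iff' 1).2 h
  simpa [VV] using this

theorem LL_symm : LL M q y x = LL M q x y := by
  unfold LL
  rw [← (Equiv.neg ℤ).tsum_eq]
  apply tsum_congr
  intro j
  simp only [Equiv.neg_apply]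
  have s : (-1 : ℂ) ^ (-j) = (-1) ^ j := by
    rw [zpow_neg]
    exact inv_eq_of_mul_eq_one_left (neg_one_sq' _)
  rw [s, mul_neg, zpow_neg, ← inv_zpow, inv_div, neg_sq]

include hM h0 h1 hx hy in
theorem core (hp : ∀ n : ℤ, (x * q ^ n) ^ 2 ≠ 1) (hp' : ∀ n : ℤ, (y * q ^ n) ^ 2 ≠ 1) :
    HasSum (fun j : ℕ => VV M q x y (j + 1) + VV M q y x (j + 1)) 
    (LL M q x y * (PhX M q x y + PhX M q y x) - (AA q x * Th M q x y + AA q y * Th M q y x)) := by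
  have a := half' M q x y hM h0 h1 hx hy hp
  have b := half' M q y x hM h0 h1 hy hx hp'
  rw [LL_symm] at b
  convert a.add b using 1
  ring
end

theorem negone (j : ℤ) : (-1 : ℂ) ^ j = exp (j * (Real.pi * I)) := by
  rw [exp_int_mul, exp_pi_mul_I]

theorem tr_L (M : ℕ) (τ z1 z2 : ℂ) :
    jTheta 0 (M + 1) τ ((-(1 / 2) + M * (z1 - z2)) / (M + 1)) =
      LL M (exp (2 * Real.pi * I * τ)) (exp (2 * Real.pi * I * z1)) (exp (2 * Real.pi * I * z2)) := by
  have hM : (M : ℂ) + 1 ≠ 0 := by exact_mod_cast Nat.succ_ne_zero M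
  unfold jTheta LL
  refine tsum_congr (fun j => ?_)
  have : (-1 : ℂ) ^ j = (-1) ^ (-j) := by
    rw [zpow_neg]; exact (inv_eq_of_mul_eq_one_left (neg_one_sq' j)).symm
  rw [this]
  simp only [negone, qpow, ← exp_int_mul, ← exp_add, ← exp_sub]
  congr 1; push_cast; field_simp; ring

theorem tr_T1 (M : ℕ) (τ z1 z2 : ℂ) :
    jTheta 0 (M + 1) τ ((1 / 2 + z1 - z2) / (M + 1) + z1 + z2) =
      Th M (exp (2 * Real.pi * I * τ)) (exp (2 * Real.pi * I * z1)) (exp (2 * Real.pi * I * z2)) := by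
  have hM : (M : ℂ) + 1 ≠ 0 := by exact_mod_cast Nat.succ_ne_zero M
  unfold jTheta Th
  refine tsum_congr (fun j => ?_)
  simp only [negone, qpow, ← exp_int_mul, ← exp_add, ← exp_sub]
  congr 1; push_cast; field_simp; ring

theorem tr_T2 (M : ℕ) (τ z1 z2 : ℂ) :
    jTheta 0 (M + 1) τ ((1 / 2 + z1 - z2) / (M + 1) - z1 - z2) =
      Th M (exp (2 * Real.pi * I * τ)) (exp (2 * Real.pi * I * z2)) (exp (2 * Real.pi * I * z1)) := by
  have hM : (M : ℂ) + 1 ≠ 0 := by exact_mod_cast Nat.succ_ne_zero M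
  unfold jTheta Th
  rw [← (Equiv.neg ℤ).tsum_eq]
  refine tsum_congr (fun j => ?_)
  have : (-1 : ℂ) ^ j = (-1) ^ (-j) := by
    rw [zpow_neg]; exact (inv_eq_of_mul_eq_one_left (neg_one_sq' j)).symm
  rw [this]
  simp only [negone, qpow, ← exp_int_mul, ← exp_add, ← exp_sub, Equiv.neg_apply]
  congr 1; push_cast; field_simp; ring

theorem tr_hp (τ z : ℂ) (h : ¬ InLattice (2 * τ) (2 * z)) (n : ℤ) :
    (exp (2 * Real.pi * I * z) * exp (2 * Real.pi * I * τ) ^ n) ^ 2 ≠ 1 := by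
  intro h'
  rw [← exp_int_mul, ← exp_add, ← exp_nat_mul, exp_eq_one_iff] at h'
  obtain ⟨a, ha⟩ := h'
  apply h
  refine ⟨a, -n, ?_⟩
  have := Complex.two_pi_I_ne_zero
  apply mul_left_cancel₀ this
  push_cast at ha ⊢
  linear_combination ha

theorem tr_q (τ : ℂ) (hτ : 0 < τ.im) : ‖exp (2 * Real.pi * I * τ)‖ < 1 := by
  rw [Complex.norm_exp, Real.exp_lt_one_iff]
  simp
  positivity

theorem tr_Phi (M : ℕ) (τ z1 z2 : ℂ) :
    Phi ((M : ℂ) / 2) (1 / 2) (2 * τ) (2 * z1) (2 * z2) 0 =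
      PhX M (exp (2 * Real.pi * I * τ)) (exp (2 * Real.pi * I * z1)) (exp (2 * Real.pi * I * z2)) +
      PhX M (exp (2 * Real.pi * I * τ)) (exp (2 * Real.pi * I * z2)) (exp (2 * Real.pi * I * z1)) := by
  unfold Phi
  rw [sub_eq_add_neg]
  congr 1
  · unfold Phi1 PhX ff
    simp only [mul_zero, exp_zero, one_mul]
    refine tsum_congr (fun j => ?_)
    rw [← mul_div_assoc]
    simp only [e2, qpow, ← exp_int_mul, ← exp_nat_mul, ← exp_add, ← exp_sub]
    congr 1
    · congr 1; push_cast; ring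
    · congr 2; push_cast; ring
  · unfold Phi2 PhX
    simp only [mul_zero, exp_zero, one_mul]
    rw [← tsum_neg, ← (Equiv.neg ℤ).tsum_eq]
    refine tsum_congr (fun j => ?_)
    have key : ∀ w : ℂ, w ≠ 0 → ff w = - (w⁻¹ / (1 - w⁻¹ ^ 2)) := by
      intro w hw
      unfold ff
      by_cases h : w ^ 2 = 1
      · have : w⁻¹ ^ 2 = 1 := by rw [inv_pow, h, inv_one]
        rw [h, this]; simp
      · have h3 : 1 - w ^ 2 ≠ 0 := sub_ne_zero.2 (Ne.symm h)
        have h4 : w ^ 2 - 1 ≠ 0 := sub_ne_zero.2 h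
        field_simp
        ring
    rw [key _ (mul_ne_zero (exp_ne_zero _) (zpow_ne_zero _ (exp_ne_zero _))), mul_neg, ← mul_div_assoc]
    congr 1
    simp only [e2, qpow, ← exp_int_mul, ← exp_nat_mul, ← exp_add, ← exp_sub, ← exp_neg, Equiv.neg_apply]
    congr 1
    · congr 1; push_cast; ring
    · congr 2; push_cast; ring

theorem tr_mum (τ z : ℂ) :
    mumford 1 1 (2 * τ) (2 * z) = I * qpow τ (1 / 4) * TT (exp (2 * Real.pi * I * τ)) (exp (2 * Real.pi * I * z)) := by
  unfold mumford TT
  rw [← tsum_mul_left]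
  refine tsum_congr (fun j => ?_)
  have : I = exp (Real.pi / 2 * I) := Complex.exp_pi_div_two_mul_I.symm
  nth_rewrite 3 [this]
  simp only [negone, qpow, ← exp_int_mul, ← exp_nat_mul, ← exp_add, ← exp_sub, ← exp_neg]
  congr 1; push_cast; ring

theorem tr_eta (τ : ℂ) :
    eta (2 * τ) ^ 3 = qpow τ (1 / 4) * PI (exp (2 * Real.pi * I * τ) ^ 2) ^ 3 := by
  have : eta (2 * τ) = qpow (2 * τ) (1 / 24) * PI (exp (2 * Real.pi * I * τ) ^ 2) := by
    unfold eta PI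
    congr 1
    refine tprod_congr (fun n => ?_)
    congr 1
    simp only [qpow, ← exp_nat_mul]
    congr 1; push_cast; ring
  rw [this, mul_pow]
  congr 1
  simp only [qpow, ← exp_nat_mul]
  congr 1; push_cast; ring

theorem tr_A (τ z X : ℂ) (hτ : 0 < τ.im) (h : ¬ InLattice (2 * τ) (2 * z)) :
    -I * eta (2 * τ) ^ 3 * (X / mumford 1 1 (2 * τ) (2 * z)) =
      AA (exp (2 * Real.pi * I * τ)) (exp (2 * Real.pi * I * z)) * X := by
  have hq := tr_q τ hτ
  have key := AT _ _ (exp_ne_zero _) hq (exp_ne_zero _) (tr_hp τ z h)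
  have hP : PI (exp (2 * Real.pi * I * τ) ^ 2) ≠ 0 := by
    apply PI_ne
    rw [norm_pow]; exact pow_lt_one₀ (norm_nonneg _) hq (by norm_num)
  rw [tr_mum, tr_eta]
  set A := AA (exp (2 * Real.pi * I * τ)) (exp (2 * Real.pi * I * z))
  set T := TT (exp (2 * Real.pi * I * τ)) (exp (2 * Real.pi * I * z))
  set P := PI (exp (2 * Real.pi * I * τ) ^ 2)
  have hT : T ≠ 0 := by
    intro h0; rw [h0, mul_zero] at key
    exact (pow_ne_zero 3 hP) (neg_eq_zero.1 key.symm)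
  have hQ : qpow τ (1 / 4) ≠ 0 := exp_ne_zero _
  have hI := I_ne_zero
  field_simp
  linear_combination -X * key

theorem tr_Y1 (M : ℕ) (hM : 0 < M) (τ z1 z2 : ℂ) (e : ℤ) :
    YY M (exp (2 * Real.pi * I * τ)) (exp (2 * Real.pi * I * z1)) (exp (2 * Real.pi * I * z2)) e =
    qpow τ (-(e : ℂ) ^ 2 / (4 * M)) * exp (Real.pi * I * e * (z1 - z2)) * jTheta e M τ (z1 + z2) := by
  have hM : (M : ℂ) ≠ 0 := by exact_mod_cast hM.ne'
  unfold YY jTheta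
  rw [← tsum_mul_left]
  refine tsum_congr (fun j => ?_)
  simp only [negone, qpow, ← exp_int_mul, ← exp_nat_mul, ← exp_add, ← exp_sub, ← exp_neg]
  congr 1; push_cast; field_simp; ring

theorem tr_Y2 (M : ℕ) (hM : 0 < M) (τ z1 z2 : ℂ) (e : ℤ) :
    YY M (exp (2 * Real.pi * I * τ)) (exp (2 * Real.pi * I * z2)) (exp (2 * Real.pi * I * z1)) e =
    qpow τ (-(e : ℂ) ^ 2 / (4 * M)) * exp (-(Real.pi * I) * e * (z1 - z2)) * jTheta e M τ (z1 + z2) := by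
  rw [tr_Y1 M hM τ z2 z1 e, add_comm z2 z1]
  congr 3; ring

theorem jTheta_per (M : ℕ) (hM : 0 < M) (τ v : ℂ) (e r : ℤ) :
    jTheta ((e + 2 * M * r : ℤ) : ℂ) M τ v = jTheta e M τ v := by
  have hM : (M : ℂ) ≠ 0 := by exact_mod_cast hM.ne'
  unfold jTheta
  rw [← (Equiv.subRight r).tsum_eq]
  refine tsum_congr (fun j => ?_)
  have : (((Equiv.subRight r) j : ℤ) : ℂ) + ((e + 2 * M * r : ℤ) : ℂ) / (2 * M) = j + e / (2 * M) := by
    simp only [Equiv.subRight_apply]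
    push_cast; field_simp; ring
  rw [this]

noncomputable def UU (M : ℕ) (τ z1 z2 : ℂ) (j : ℕ) (e : ℤ) : ℂ :=
  (-1) ^ j * qpow τ ((j : ℂ) ^ 2 + j * e - (e : ℂ) ^ 2 / (4 * M)) *
    (exp (Real.pi * I * e * (z1 - z2)) + exp (-(Real.pi * I) * e * (z1 - z2))) *
    (jTheta ((-e : ℤ) : ℂ) M τ (z1 + z2) - jTheta e M τ (z1 + z2))

theorem tr_V (M : ℕ) (hM : 0 < M) (τ z1 z2 : ℂ) (j : ℕ) :
    VV M (exp (2 * Real.pi * I * τ)) (exp (2 * Real.pi * I * z1)) (exp (2 * Real.pi * I * z2)) j +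
    VV M (exp (2 * Real.pi * I * τ)) (exp (2 * Real.pi * I * z2)) (exp (2 * Real.pi * I * z1)) j =
    ∑ i ∈ Finset.range (M * j), UU M τ z1 z2 j (2 * i + 1) := by
  unfold VV
  rw [← mul_add, ← Finset.sum_add_distrib, Finset.mul_sum]
  refine Finset.sum_congr rfl (fun i _ => ?_)
  simp only [tr_Y1 M hM τ z1 z2, tr_Y2 M hM τ z1 z2]
  unfold UU
  have e1 : qpow τ ((j : ℂ) ^ 2 + j * ((2 * (i : ℤ) + 1 : ℤ) : ℂ) - ((2 * (i : ℤ) + 1 : ℤ) : ℂ) ^ 2 / (4 * M)) =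
      exp (2 * Real.pi * I * τ) ^ (j ^ 2) * exp (2 * Real.pi * I * τ) ^ (j * (2 * i + 1)) *
        qpow τ (-((2 * (i : ℤ) + 1 : ℤ) : ℂ) ^ 2 / (4 * M)) := by
    simp only [qpow, ← exp_nat_mul, ← exp_add]
    congr 1; push_cast; ring
  rw [e1]
  have e3 : (((-(2 * (i : ℤ) + 1) : ℤ)) : ℂ) ^ 2 = (((2 * (i : ℤ) + 1 : ℤ)) : ℂ) ^ 2 := by push_cast; ring
  have e4 : Real.pi * I * (((-(2 * (i : ℤ) + 1) : ℤ)) : ℂ) * (z1 - z2) = -(Real.pi * I) * (((2 * (i : ℤ) + 1 : ℤ)) : ℂ) * (z1 - z2) := by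
    push_cast; ring
  have e5 : -(Real.pi * I) * (((-(2 * (i : ℤ) + 1) : ℤ)) : ℂ) * (z1 - z2) = Real.pi * I * (((2 * (i : ℤ) + 1 : ℤ)) : ℂ) * (z1 - z2) := by
    push_cast; ring
  rw [e3, e4, e5]
  ring

theorem icc_sum (h : ℕ → ℂ) (N : ℕ) : ∑ k ∈ Finset.Icc 1 N, h k = ∑ k ∈ Finset.range N, h (k + 1) := by
  induction N with
  | zero => simp
  | succ n ih => rw [Finset.sum_Icc_succ_top (by omega), ih, Finset.sum_range_succ]

theorem odd_sum (g : ℕ → ℂ) (M : ℕ) : ∑ i ∈ Finset.range M, g (2 * i + 1) =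
    ∑ e ∈ Finset.range (2 * M), if Odd e then g e else 0 := by
  induction M with
  | zero => simp
  | succ n ih =>
    rw [Finset.sum_range_succ, ih, show 2 * (n + 1) = 2 * n + 1 + 1 by ring, Finset.sum_range_succ, Finset.sum_range_succ]
    simp

theorem block (g : ℕ → ℂ) (M : ℕ) (hM : 0 < M) (hz : Odd M → g M = 0) :
    ∑ i ∈ Finset.range M, g (2 * i + 1) =
      ∑ k ∈ (Finset.Icc 1 (M - 1)).filter (fun k => Odd k), g (2 * M - k) +
      ∑ k ∈ (Finset.Icc 1 (M - 1)).filter (fun k => Odd k), g k := by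
  obtain ⟨N, rfl⟩ : ∃ N, M = N + 1 := ⟨M - 1, by omega⟩
  rw [odd_sum, show 2 * (N + 1) = (N + 1) + (N + 1) by ring, Finset.sum_range_add, add_comm,
    Finset.sum_filter, Finset.sum_filter]
  congr 1
  · rw [← Finset.sum_range_reflect, Finset.sum_range_succ, Nat.add_sub_cancel, icc_sum]
    have : (if Odd (N + 1 + (N + 1 - 1 - N)) then g (N + 1 + (N + 1 - 1 - N)) else 0) = 0 := by
      rw [show N + 1 + (N + 1 - 1 - N) = N + 1 by omega]
      split_ifs with h
      · exact hz h
      · rfl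
    simp only [Nat.add_sub_cancel] at this
    rw [this, add_zero]
    refine Finset.sum_congr rfl (fun k hk => ?_)
    have hk := Finset.mem_range.1 hk
    rw [show N + 1 + (N - k) = N + 1 + (N + 1) - (k + 1) by omega]
    have : Odd (N + 1 + (N + 1) - (k + 1)) ↔ Odd (k + 1) := by
      simp only [Nat.odd_iff]; omega
    simp only [this]
  · rw [Nat.add_sub_cancel, icc_sum, Finset.sum_range_succ']
    simp

theorem reindex (f : ℤ → ℂ) (M : ℕ) (hM : 0 < M) (hz : ∀ r : ℕ, Odd M → f (2 * M * r + M) = 0) (j : ℕ) :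
    ∑ i ∈ Finset.range (M * j), f (2 * i + 1) =
      ∑ r ∈ Finset.Icc 1 j, ∑ k ∈ (Finset.Icc 1 (M - 1)).filter (fun k => Odd k), f (2 * M * r - k) +
      ∑ r ∈ Finset.range j, ∑ k ∈ (Finset.Icc 1 (M - 1)).filter (fun k => Odd k), f (2 * M * r + k) := by
  induction j with
  | zero => simp
  | succ j ih =>
    rw [Nat.mul_succ, Finset.sum_range_add, ih, Finset.sum_Icc_succ_top (by omega), Finset.sum_range_succ]
    have := block (fun e => f (2 * M * j + e)) M hM (fun h => hz j h)
    have e : ∑ i ∈ Finset.range M, f (2 * ((M * j + i : ℕ) : ℤ) + 1) = ∑ i ∈ Finset.range M, f (2 * M * j + ((2 * i + 1 : ℕ) : ℤ)) := by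
      refine Finset.sum_congr rfl (fun k hk => ?_)
      congr 1; push_cast; ring
    have e' : ∑ k ∈ (Finset.Icc 1 (M - 1)).filter (fun k => Odd k), f (2 * M * j + ((2 * M - k : ℕ) : ℤ)) =
        ∑ k ∈ (Finset.Icc 1 (M - 1)).filter (fun k => Odd k), f (2 * M * ((j + 1 : ℕ) : ℤ) - k) := by
      refine Finset.sum_congr rfl (fun k hk => ?_)
      have := Finset.mem_Icc.1 (Finset.mem_filter.1 hk).1
      congr 1; rw [Nat.cast_sub (by omega)]; push_cast; ring
    rw [e, this, e']
    ring

theorem UU_zero (M : ℕ) (hM : 0 < M) (τ z1 z2 : ℂ) (j r : ℕ) : UU M τ z1 z2 j (2 * M * r + M) = 0 := by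
  unfold UU
  have := jTheta_per M hM τ (z1 + z2) (-(2 * M * r + M)) (2 * r + 1)
  rw [← this]
  rw [show (-(2 * (M:ℤ) * r + M) + 2 * M * (2 * r + 1)) = 2 * M * r + M by ring, sub_self, mul_zero]

theorem UU_one (M : ℕ) (hM : 0 < M) (τ z1 z2 : ℂ) (j r k : ℕ) :
    UU M τ z1 z2 j (2 * M * r - k) =
    (-1 : ℂ) ^ j *
              qpow τ (((M : ℂ) + 1) * (j : ℂ) ^ 2 -
                (2 * (M : ℂ) * ((j : ℂ) - (r : ℂ)) + (k : ℂ)) ^ 2 / (4 * (M : ℂ))) *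
              (Complex.exp (Real.pi * Complex.I *
                  (2 * (M : ℂ) * (r : ℂ) - (k : ℂ)) * (z1 - z2)) +
                Complex.exp (-(Real.pi * Complex.I) *
                  (2 * (M : ℂ) * (r : ℂ) - (k : ℂ)) * (z1 - z2))) *
              (jTheta (k : ℂ) (M : ℂ) τ (z1 + z2) -
                jTheta (-(k : ℂ)) (M : ℂ) τ (z1 + z2)) := by
  have hM' : (M : ℂ) ≠ 0 := by exact_mod_cast hM.ne'
  unfold UU
  have h1 := jTheta_per M hM τ (z1 + z2) (-(2 * M * r - k)) r
  have h2 := jTheta_per M hM τ (z1 + z2) (2 * M * r - k) (-r)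
  rw [← h1, ← h2]
  push_cast
  congr 1
  · congr 1
    congr 2
    field_simp
    ring
  · congr 2 <;> ring

theorem UU_two (M : ℕ) (hM : 0 < M) (τ z1 z2 : ℂ) (j r k : ℕ) :
    UU M τ z1 z2 j (2 * M * r + k) =
    -((-1 : ℂ) ^ j *
              qpow τ (((M : ℂ) + 1) * (j : ℂ) ^ 2 -
                (2 * (M : ℂ) * ((j : ℂ) - (r : ℂ)) - (k : ℂ)) ^ 2 / (4 * (M : ℂ))) *
              (Complex.exp (Real.pi * Complex.I *
                  (2 * (M : ℂ) * (r : ℂ) + (k : ℂ)) * (z1 - z2)) +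
                Complex.exp (-(Real.pi * Complex.I) *
                  (2 * (M : ℂ) * (r : ℂ) + (k : ℂ)) * (z1 - z2))) *
              (jTheta (k : ℂ) (M : ℂ) τ (z1 + z2) -
                jTheta (-(k : ℂ)) (M : ℂ) τ (z1 + z2))) := by
  have hM' : (M : ℂ) ≠ 0 := by exact_mod_cast hM.ne'
  unfold UU
  have h1 := jTheta_per M hM τ (z1 + z2) (-(2 * M * r + k)) r
  have h2 := jTheta_per M hM τ (z1 + z2) (2 * M * r + k) (-r)
  rw [← h1, ← h2, ← mul_neg ((-1 : ℂ) ^ j * _ * _), neg_sub]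
  push_cast
  congr 1
  · congr 1
    congr 2
    field_simp
    ring
  · congr 2 <;> ring

/-- A uniform bound on the theta differences. -/
theorem UU_bound (M : ℕ) (hM : 0 < M) (τ z1 z2 : ℂ) (hτ : 0 < τ.im) :
    ∃ B S : ℝ, 0 ≤ B ∧ 1 ≤ S ∧ ∀ (j : ℕ) (e : ℤ), 0 ≤ e → e ≤ 2 * M * j →
      ‖UU M τ z1 z2 j e‖ ≤ B * (S ^ j * ‖exp (2 * Real.pi * I * τ)‖ ^ (j ^ 2)) := by
  have hM' : (M : ℂ) ≠ 0 := by exact_mod_cast hM.ne'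
  have hMr : (0 : ℝ) < M := by exact_mod_cast hM
  -- theta differences are periodic, hence bounded
  have hB : ∃ B : ℝ, 0 ≤ B ∧ ∀ e : ℤ, ‖jTheta e M τ (z1 + z2)‖ ≤ B := by
    refine ⟨∑ k ∈ Finset.range (2 * M), ‖jTheta ((k : ℤ) : ℂ) M τ (z1 + z2)‖, by positivity, fun e => ?_⟩
    have hpos : (0 : ℤ) < 2 * M := by positivity
    have h1 := jTheta_per M hM τ (z1 + z2) (e % (2 * M)) (e / (2 * M))
    rw [Int.emod_add_mul_ediv] at h1
    rw [h1]
    obtain ⟨k, hk⟩ := Int.eq_ofNat_of_zero_le (Int.emod_nonneg e hpos.ne')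
    have hk2 := Int.emod_lt_of_pos e hpos
    rw [hk] at hk2 ⊢
    exact Finset.single_le_sum (f := fun k : ℕ => ‖jTheta ((k : ℤ) : ℂ) M τ (z1 + z2)‖)
      (fun _ _ => norm_nonneg _) (Finset.mem_range.2 (by omega))
  obtain ⟨B, hB0, hB⟩ := hB
  set s : ℝ := Real.pi * ‖z1 - z2‖ with hs
  have hs0 : 0 ≤ s := by positivity
  refine ⟨4 * B, Real.exp (s * (2 * M)), by positivity, Real.one_le_exp (by positivity), fun j e he0 he1 => ?_⟩
  have he0' : (0 : ℝ) ≤ e := by exact_mod_cast he0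
  have he1' : (e : ℝ) ≤ 2 * M * j := by exact_mod_cast he1
  have hE : ∀ c : ℂ, ‖c‖ = Real.pi → ‖exp (c * e * (z1 - z2))‖ ≤ Real.exp (s * (2 * M)) ^ j := by
    intro c hc
    refine (Complex.norm_exp_le_exp_norm _).trans ?_
    rw [← Real.exp_nat_mul, Real.exp_le_exp, norm_mul, norm_mul, hc, Complex.norm_intCast, abs_of_nonneg he0']
    have : Real.pi * e * ‖z1 - z2‖ = s * e := by rw [hs]; ring
    rw [this]
    nlinarith
  have hQ : ‖qpow τ ((j : ℂ) ^ 2 + j * e - (e : ℂ) ^ 2 / (4 * M))‖ ≤ ‖exp (2 * Real.pi * I * τ)‖ ^ (j ^ 2) := by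
    unfold qpow
    rw [Complex.norm_exp, Complex.norm_exp, ← Real.exp_nat_mul, Real.exp_le_exp]
    have : ((j : ℂ) ^ 2 + j * e - (e : ℂ) ^ 2 / (4 * M)) = (((j : ℝ) ^ 2 + j * e - (e : ℝ) ^ 2 / (4 * M) : ℝ) : ℂ) := by
      push_cast; rfl
    rw [this, Complex.re_mul_ofReal]
    have h2 : (2 * Real.pi * I * τ).re = -(2 * Real.pi * τ.im) := by simp
    rw [h2]
    have h3 : 0 ≤ (j : ℝ) * e - (e : ℝ) ^ 2 / (4 * M) := by
      rw [sub_nonneg, div_le_iff₀ (by positivity)]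
      nlinarith
    have h4 : 0 ≤ 2 * Real.pi * τ.im := by positivity
    push_cast
    nlinarith
  unfold UU
  rw [norm_mul, norm_mul, norm_mul, norm_pow, norm_neg, norm_one, one_pow, one_mul]
  have a1 : ‖exp (Real.pi * I * e * (z1 - z2)) + exp (-(Real.pi * I) * e * (z1 - z2))‖ ≤ 2 * Real.exp (s * (2 * M)) ^ j := by
    refine (norm_add_le _ _).trans ?_
    have := hE (Real.pi * I) (by simp [abs_of_pos Real.pi_pos])
    have := hE (-(Real.pi * I)) (by simp [abs_of_pos Real.pi_pos])
    linarith
  have a2 : ‖jTheta ((-e : ℤ) : ℂ) M τ (z1 + z2) - jTheta e M τ (z1 + z2)‖ ≤ 2 * B := by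
    refine (norm_sub_le _ _).trans ?_
    linarith [hB (-e), hB e]
  calc _ ≤ ‖exp (2 * Real.pi * I * τ)‖ ^ (j ^ 2) * (2 * Real.exp (s * (2 * M)) ^ j) * (2 * B) := by gcongr
    _ = _ := by ring

theorem sumUU (M : ℕ) (hM : 0 < M) (τ z1 z2 : ℂ) (hτ : 0 < τ.im) (R : ℕ → Finset ℕ) (K : Finset ℕ) (E : ℕ → ℕ → ℤ)
    (hR : ∀ j, (R j).card = j + 1)
    (hE : ∀ j, ∀ r ∈ R j, ∀ k ∈ K, 0 ≤ E r k ∧ E r k ≤ 2 * M * ((j + 1 : ℕ) : ℤ)) :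
    Summable (fun j : ℕ => ∑ r ∈ R j, ∑ k ∈ K, UU M τ z1 z2 (j + 1) (E r k)) := by
  obtain ⟨B, S, hB, hS, h⟩ := UU_bound M hM τ z1 z2 hτ
  have hg := gs ‖exp (2 * Real.pi * I * τ)‖ S (norm_pos_iff.2 (exp_ne_zero _)) (tr_q τ hτ) (by linarith) 1
  have hg2 : Summable (fun j : ℕ => (K.card * B : ℝ) * (((j + 1 : ℕ) : ℝ) * (S ^ (j + 1) * ‖exp (2 * Real.pi * I * τ)‖ ^ ((j + 1) ^ 2)))) := by
    apply Summable.mul_left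
    have : Function.Injective (fun j : ℕ => ((j + 1 : ℕ) : ℤ)) := fun a b h => by simpa using h
    refine (hg.comp_injective this).congr (fun j => ?_)
    simp only [Function.comp, pow_one]
    congr 1
    · push_cast; exact abs_of_nonneg (by positivity)
  refine Summable.of_norm_bounded hg2 (fun j => ?_)
  refine (norm_sum_le_of_le _ (fun r hr => norm_sum_le_of_le _ (fun k hk => h (j + 1) _ (hE j r hr k hk).1 (hE j r hr k hk).2))).trans (le_of_eq ?_)
  rw [Finset.sum_const, Finset.sum_const, hR]
  simp only [nsmul_eq_mul]
  push_cast
  ring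

theorem statement13 (m : ℝ) (M : ℕ) (hM : 0 < M) (hm : m = M / 2)
    (τ : ℂ) (hτ : 0 < τ.im) (z1 z2 : ℂ)
    (h1 : ¬ InLattice (2 * τ) (2 * z1)) (h2 : ¬ InLattice (2 * τ) (2 * z2)) :
    jTheta 0 (2 * (m : ℂ) + 1) τ
          ((-(1 / 2) + 2 * (m : ℂ) * (z1 - z2)) / (2 * (m : ℂ) + 1)) *
        Phi (m : ℂ) (1 / 2) (2 * τ) (2 * z1) (2 * z2) 0 =
      -Complex.I * eta (2 * τ) ^ 3 *
          (jTheta 0 (2 * (m : ℂ) + 1) τ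
              ((1 / 2 + z1 - z2) / (2 * (m : ℂ) + 1) + z1 + z2) /
              mumford 1 1 (2 * τ) (2 * z1) +
            jTheta 0 (2 * (m : ℂ) + 1) τ
              ((1 / 2 + z1 - z2) / (2 * (m : ℂ) + 1) - z1 - z2) /
              mumford 1 1 (2 * τ) (2 * z2)) +
        (∑' j : ℕ, ∑ r ∈ Finset.Icc 1 (j + 1),
          ∑ k ∈ (Finset.Icc 1 (M - 1)).filter (fun k => Odd k),
            (-1 : ℂ) ^ (j + 1) *
              qpow τ ((2 * (m : ℂ) + 1) * ((j : ℂ) + 1) ^ 2 -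
                (4 * (m : ℂ) * ((j : ℂ) + 1 - (r : ℂ)) + (k : ℂ)) ^ 2 / (8 * (m : ℂ))) *
              (Complex.exp (Real.pi * Complex.I *
                  (4 * (m : ℂ) * (r : ℂ) - (k : ℂ)) * (z1 - z2)) +
                Complex.exp (-(Real.pi * Complex.I) *
                  (4 * (m : ℂ) * (r : ℂ) - (k : ℂ)) * (z1 - z2))) *
              (jTheta (k : ℂ) (2 * (m : ℂ)) τ (z1 + z2) -
                jTheta (-(k : ℂ)) (2 * (m : ℂ)) τ (z1 + z2))) -
        (∑' j : ℕ, ∑ r ∈ Finset.range (j + 1),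
          ∑ k ∈ (Finset.Icc 1 (M - 1)).filter (fun k => Odd k),
            (-1 : ℂ) ^ (j + 1) *
              qpow τ ((2 * (m : ℂ) + 1) * ((j : ℂ) + 1) ^ 2 -
                (4 * (m : ℂ) * ((j : ℂ) + 1 - (r : ℂ)) - (k : ℂ)) ^ 2 / (8 * (m : ℂ))) *
              (Complex.exp (Real.pi * Complex.I *
                  (4 * (m : ℂ) * (r : ℂ) + (k : ℂ)) * (z1 - z2)) +
                Complex.exp (-(Real.pi * Complex.I) *
                  (4 * (m : ℂ) * (r : ℂ) + (k : ℂ)) * (z1 - z2))) *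
              (jTheta (k : ℂ) (2 * (m : ℂ)) τ (z1 + z2) -
                jTheta (-(k : ℂ)) (2 * (m : ℂ)) τ (z1 + z2))) := by
  have hmM : 2 * (m : ℂ) = M := by rw [hm]; push_cast; ring
  have hm1 : (m : ℂ) = (M : ℂ) / 2 := by rw [hm]; push_cast; ring
  have h4 : 4 * (m : ℂ) = 2 * M := by linear_combination 2 * hmM
  have h8 : 8 * (m : ℂ) = 4 * M := by linear_combination 4 * hmM
  rw [h8, h4, hmM, hm1]
  have hc := core M (exp (2 * Real.pi * I * τ)) (exp (2 * Real.pi * I * z1)) (exp (2 * Real.pi * I * z2)) hM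
    (exp_ne_zero _) (tr_q τ hτ) (exp_ne_zero _) (exp_ne_zero _) (tr_hp τ z1 h1) (tr_hp τ z2 h2)
  have hz := fun (j r : ℕ) (_ : Odd M) => UU_zero M hM τ z1 z2 j r
  have hc2 := hc.tsum_eq
  rw [tsum_congr (fun j => (tr_V M hM τ z1 z2 (j + 1)).trans (reindex (UU M τ z1 z2 (j + 1)) M hM (hz (j + 1)) (j + 1)))] at hc2
  have hk : ∀ k ∈ (Finset.Icc 1 (M - 1)).filter (fun k => Odd k), k < M := by
    intro k hk
    have := Finset.mem_Icc.1 (Finset.mem_filter.1 hk).1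
    omega
  have s1 := sumUU M hM τ z1 z2 hτ (fun j => Finset.Icc 1 (j + 1)) ((Finset.Icc 1 (M - 1)).filter (fun k => Odd k))
    (fun r k => 2 * M * r - k) (by intro j; simp) (by
      intro j r hr k hkk
      have := hk k hkk
      have hr := Finset.mem_Icc.1 hr
      have a : (1 : ℤ) ≤ r := by exact_mod_cast hr.1
      have b : (r : ℤ) ≤ ((j + 1 : ℕ) : ℤ) := by exact_mod_cast hr.2
      have c : (k : ℤ) < M := by exact_mod_cast this
      have d : (0 : ℤ) ≤ k := by positivity
      constructor <;> nlinarith)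
  have s2 := sumUU M hM τ z1 z2 hτ (fun j => Finset.range (j + 1)) ((Finset.Icc 1 (M - 1)).filter (fun k => Odd k))
    (fun r k => 2 * M * r + k) (by intro j; simp) (by
      intro j r hr k hkk
      have := hk k hkk
      have hr := Finset.mem_range.1 hr
      have a : (0 : ℤ) ≤ r := by positivity
      have b : (r : ℤ) + 1 ≤ ((j + 1 : ℕ) : ℤ) := by exact_mod_cast hr
      have c : (k : ℤ) < M := by exact_mod_cast this
      have d : (0 : ℤ) ≤ k := by positivity
      constructor <;> nlinarith)
  rw [Summable.tsum_add s1 s2] at hc2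
  simp only [UU_one M hM, UU_two M hM, Finset.sum_neg_distrib, tsum_neg, Nat.cast_add, Nat.cast_one] at hc2
  rw [mul_add (-I * eta (2 * τ) ^ 3), tr_A τ z1 _ hτ h1, tr_A τ z2 _ hτ h2, tr_L, tr_T1, tr_T2, tr_Phi]
  linear_combination -hc2


end Wakimoto
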